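/- arXiv:1810.09046 — 3 statements merged into one kernel-verified Lean document; each statement's English description precedes it below -/
import Mathlib

section
/- Source-free Maxwell fields track null geodesics (flat-space version of the claim that electromagnetic fields track all null geodesics): let 𝒞 be the collection of stress-energy tensors T[F] of all smooth fields F : ℝ⁴ → Matrix (Fin 4) (Fin 4) ℝ with antisymmetric values solving the source-free Maxwell equations. Then for every p ∈ ℝ⁴ and every future null u ∈ ℝ⁴, the collection 𝒞 tracks the null geodesic γ : t ↦ p + t • u. -/
open Matrix MeasureTheory Filter Topology

noncomputable section

abbrev Vec4 : Type := Fin 4 → ℝ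
abbrev Mat4 : Type := Matrix (Fin 4) (Fin 4) ℝ

/-- The Minkowski inner product on ℝ⁴. -/
def mink (x y : Vec4) : ℝ := x 0 * y 0 - x 1 * y 1 - x 2 * y 2 - x 3 * y 3

/-- The matrix diag(1,-1,-1,-1). -/
def E : Mat4 := Matrix.diagonal ![1, -1, -1, -1]

def FutureCausal (x : Vec4) : Prop := 0 ≤ mink x x ∧ 0 ≤ x 0
def FutureTimelike (x : Vec4) : Prop := 0 < mink x x ∧ 0 < x 0
def FutureNull (x : Vec4) : Prop := x ≠ 0 ∧ mink x x = 0 ∧ 0 < x 0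
def UnitTimelike (x : Vec4) : Prop := FutureTimelike x ∧ mink x x = 1

/-- The dominant energy condition for a matrix. -/
def DEC (T : Mat4) : Prop :=
  ∀ ξ ζ : Vec4, FutureCausal ξ → FutureCausal ζ → 0 ≤ ∑ i, ∑ j, ξ i * T i j * ζ j

/-- ⟨T, x⟩ = Σᵢⱼ T i j * x i j. -/
def minner (T x : Mat4) : ℝ := ∑ i, ∑ j, T i j * x i j

/-- The cone D of finite sums of symmetrized products of future causal vectors. -/
def coneD : Set Mat4 :=
  { x | ∃ (n : ℕ) (ξ ζ : Fin n → Vec4),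
      (∀ k, FutureCausal (ξ k)) ∧ (∀ k, FutureCausal (ζ k)) ∧
      x = ∑ k, (1/2 : ℝ) • (vecMulVec (ξ k) (ζ k) + vecMulVec (ζ k) (ξ k)) }

/-- A symmetric matrix is generic if it lies in the interior of D, taken within
the space of symmetric matrices. -/
def Generic (x : Mat4) : Prop :=
  ∃ h : xᵀ = x, (⟨x, h⟩ : { A : Mat4 // Aᵀ = A }) ∈
    interior { A : { A : Mat4 // Aᵀ = A } | A.val ∈ coneD }

/-- Partial derivative in the a-th coordinate direction. -/
def pd (a : Fin 4) (f : Vec4 → ℝ) (p : Vec4) : ℝ := fderiv ℝ f p (Pi.single a 1)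

def SmoothMatField (T : Vec4 → Mat4) : Prop := ∀ a b, ContDiff ℝ (⊤ : ℕ∞) fun p => T p a b
def SymValued (T : Vec4 → Mat4) : Prop := ∀ p, (T p)ᵀ = T p
def DivFree (T : Vec4 → Mat4) : Prop := ∀ p b, ∑ a, pd a (fun q => T q a b) p = 0

/-- A collection of fields tracks a curve. -/
def Tracks (C : Set (Vec4 → Mat4)) (γ : ℝ → Vec4) : Prop :=
  ∀ x : Vec4 → Mat4, SmoothMatField x → HasCompactSupport x → SymValued x →
    (∃ O : Set Vec4, IsOpen O ∧ Set.range γ ⊆ O ∧ ∀ p ∈ O, x p ∈ coneD) →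
    (∃ t₀ : ℝ, Generic (x (γ t₀))) →
    ∃ T ∈ C, 0 < ∫ p, minner (T p) (x p)

/-- Maxwell stress-energy tensor of a field strength matrix. -/
def maxwellT (F : Mat4) : Mat4 :=
  F * E * F - ((1/4 : ℝ) * (E * F * E * F).trace) • E

/-- Source-free Maxwell equations. -/
def SolvesMaxwell (F : Vec4 → Mat4) : Prop :=
  (∀ p b, ∑ a, E a a * pd a (fun q => F q a b) p = 0) ∧
  (∀ p a b c, pd a (fun q => F q b c) p + pd b (fun q => F q c a) p
      + pd c (fun q => F q a b) p = 0)

/-- Klein–Gordon stress-energy tensor. -/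
def kgT (φ : Vec4 → ℝ) (m : ℝ) (p : Vec4) : Mat4 :=
  Matrix.of fun a b =>
    pd a φ p * pd b φ p
      - (1/2 : ℝ) * E a b * ((∑ c, E c c * (pd c φ p)^2) - m^2 * (φ p)^2)

/-- Mass-m Klein–Gordon equation. -/
def SolvesKG (φ : Vec4 → ℝ) (m : ℝ) : Prop :=
  ∀ p, pd 0 (pd 0 φ) p - pd 1 (pd 1 φ) p - pd 2 (pd 2 φ) p - pd 3 (pd 3 φ) p
    + m^2 * φ p = 0

/-- The collection of stress-energy tensors of smooth solutions to the source-free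
Maxwell equations. -/
def maxwellC : Set (Vec4 → Mat4) :=
  { T | ∃ F : Vec4 → Mat4, (∀ a b : Fin 4, ContDiff ℝ (⊤ : ℕ∞) fun p => F p a b) ∧
      (∀ p, (F p)ᵀ = -(F p)) ∧ SolvesMaxwell F ∧ T = fun p => maxwellT (F p) }


/-! ### Null covectors and the cone `coneD` -/

/-- A covector that is nonnegative on every future causal vector. -/
def PosCovector (m : Vec4) : Prop := ∀ ξ, FutureCausal ξ → 0 ≤ ∑ i, m i * ξ i

lemma posCovector_of_null {m : Vec4} (h0 : 0 ≤ m 0)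
    (h : m 0 ^ 2 = m 1 ^ 2 + m 2 ^ 2 + m 3 ^ 2) : PosCovector m := by
  rintro ξ ⟨h1, h2⟩
  simp only [mink] at h1
  rw [Fin.sum_univ_four]
  have key : (m 1 * ξ 1 + m 2 * ξ 2 + m 3 * ξ 3) ^ 2 ≤ (m 0 * ξ 0) ^ 2 := by
    have e1 : (m 1 * ξ 1 + m 2 * ξ 2 + m 3 * ξ 3) ^ 2 ≤
        (m 1 ^ 2 + m 2 ^ 2 + m 3 ^ 2) * (ξ 1 ^ 2 + ξ 2 ^ 2 + ξ 3 ^ 2) := by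
      nlinarith [sq_nonneg (m 1 * ξ 2 - m 2 * ξ 1), sq_nonneg (m 1 * ξ 3 - m 3 * ξ 1),
        sq_nonneg (m 2 * ξ 3 - m 3 * ξ 2)]
    rw [← h] at e1
    have e2 : m 0 ^ 2 * (ξ 1 ^ 2 + ξ 2 ^ 2 + ξ 3 ^ 2) ≤ m 0 ^ 2 * ξ 0 ^ 2 :=
      mul_le_mul_of_nonneg_left (by linarith) (sq_nonneg _)
    rw [mul_pow]
    exact e1.trans e2
  linarith [neg_le_of_abs_le (abs_le_of_sq_le_sq key (mul_nonneg h0 h2))]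

/-- The quadratic form of a matrix on a covector. -/
def quad (x : Mat4) (m : Vec4) : ℝ := ∑ i, ∑ j, m i * m j * x i j

lemma quad_nonneg {x : Mat4} {m : Vec4} (hx : x ∈ coneD) (hm : PosCovector m) :
    0 ≤ quad x m := by
  obtain ⟨n, ξ, ζ, hξ, hζ, rfl⟩ := hx
  have : quad (∑ k, (1/2 : ℝ) • (vecMulVec (ξ k) (ζ k) + vecMulVec (ζ k) (ξ k))) m =
      ∑ k, (∑ i, m i * ξ k i) * (∑ j, m j * ζ k j) := by
    simp only [quad, Matrix.sum_apply, Finset.mul_sum]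
    rw [Finset.sum_congr rfl fun i _ => Finset.sum_comm, Finset.sum_comm]
    refine Finset.sum_congr rfl fun k _ => ?_
    simp only [Fin.sum_univ_four, Matrix.smul_apply, Matrix.add_apply, vecMulVec_apply, smul_eq_mul]
    ring
  rw [this]
  exact Finset.sum_nonneg fun k _ => mul_nonneg (hm _ (hξ k)) (hm _ (hζ k))

lemma quad_pos {x : Mat4} {m : Vec4} (hx : Generic x) (hm : PosCovector m) (h0 : m ≠ 0) :
    0 < quad x m := by
  obtain ⟨hs, hx⟩ := hx
  let c : ℝ → { A : Mat4 // Aᵀ = A } := fun t =>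
    ⟨x - t • (1 : Mat4), by simp [hs]⟩
  have hc : Continuous c := by
    refine Continuous.subtype_mk ?_ _
    fun_prop
  have hc0 : c 0 = ⟨x, hs⟩ := by simp [c]
  have hev : ∀ᶠ t in 𝓝 (0 : ℝ), (c t).val ∈ coneD := by
    have := hc.continuousAt (x := 0)
    exact this.eventually (hc0 ▸ mem_interior_iff_mem_nhds.1 hx)
  obtain ⟨t, ht, htpos⟩ := ((hev.filter_mono nhdsWithin_le_nhds).and
    (self_mem_nhdsWithin : Set.Ioi (0:ℝ) ∈ 𝓝[>] 0)).exists
  have h1 := quad_nonneg ht hm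
  have h2 : quad (c t).val m = quad x m - t * ∑ i, m i ^ 2 := by
    simp [quad, c, Fin.sum_univ_four, Matrix.one_apply]
    ring
  have h3 : 0 < ∑ i, m i ^ 2 := by
    obtain ⟨i, hi⟩ := Function.ne_iff.1 h0
    exact Finset.sum_pos' (fun i _ => sq_nonneg _) ⟨i, Finset.mem_univ _, by
      have : m i ≠ 0 := hi
      positivity⟩
  have := mul_pos htpos h3
  linarith

lemma minner_smul_vecMulVec (c : ℝ) (m : Vec4) (x : Mat4) :
    minner (c • vecMulVec m m) x = c * quad x m := by
  simp only [minner, quad, Matrix.smul_apply, vecMulVec_apply, smul_eq_mul, Finset.mul_sum]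
  simp only [mul_assoc]

/-! ### A Laplace-type concentration argument -/

lemma exists_pos_integral_exp_mul {X : Type*} [TopologicalSpace X] [MeasurableSpace X]
    [OpensMeasurableSpace X] {μ : Measure X} [IsFiniteMeasureOnCompacts μ]
    [μ.IsOpenPosMeasure] {Q R : X → ℝ} {O : Set X} {q₀ : X}
    (hQ : Continuous Q) (hR : Continuous R) (hRc : HasCompactSupport R) (hO : IsOpen O)
    (hRO : ∀ q ∈ O, 0 ≤ R q) (hQO : ∀ q ∈ tsupport R \ O, 0 < Q q)
    (hq : Q q₀ ≤ 0) (hRq : 0 < R q₀) :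
    ∃ n : ℕ, 0 < ∫ q, Real.exp (-n * Q q) * R q ∂μ := by
  obtain ⟨δ, hδ, hδQ⟩ : ∃ δ > 0, ∀ q ∈ tsupport R \ O, δ ≤ Q q := by
    have hK : IsCompact (tsupport R \ O) := hRc.isCompact.diff hO
    exact hK.exists_forall_le' hQ.continuousOn hQO
  let S : X → ℝ := fun q => max (δ - Q q) 0 * R q
  have hS : Continuous S := by fun_prop
  have hSc : HasCompactSupport S := hRc.mul_left
  have hout : ∀ q, q ∉ O → S q = 0 := by
    intro q hqO
    by_cases hK : q ∈ tsupport R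
    · simp [S, max_eq_right (sub_nonpos.2 (hδQ q ⟨hK, hqO⟩))]
    · simp [S, image_eq_zero_of_notMem_tsupport hK]
  have hS0 : 0 ≤ S := by
    intro q
    by_cases hqO : q ∈ O
    · exact mul_nonneg (le_max_right _ _) (hRO q hqO)
    · exact (hout q hqO).ge
  have hSpos : 0 < ∫ q, S q ∂μ := by
    refine hS.integral_pos_of_hasCompactSupport_nonneg_nonzero hSc hS0 (x := q₀) ?_
    exact (mul_pos (lt_max_of_lt_left (by linarith)) hRq).ne'
  have hRi : Integrable (fun q => |R q|) μ := (hR.integrable_of_hasCompactSupport hRc).abs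
  have hSi : Integrable S μ := hS.integrable_of_hasCompactSupport hSc
  obtain ⟨n, hn⟩ := exists_nat_gt ((∫ q, |R q| ∂μ) / ∫ q, S q ∂μ)
  refine ⟨n, ?_⟩
  rw [div_lt_iff₀ hSpos] at hn
  have hgi : Integrable (fun q => Real.exp (n * δ) * (Real.exp (-n * Q q) * R q)) μ := by
    refine Integrable.const_mul ?_ _
    exact Continuous.integrable_of_hasCompactSupport (by fun_prop) hRc.mul_left
  have hle : ∫ q, (n * S q - |R q|) ∂μ ≤
      ∫ q, Real.exp (n * δ) * (Real.exp (-n * Q q) * R q) ∂μ := by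
    refine integral_mono ((hSi.const_mul _).sub hRi) hgi fun q => ?_
    have hexp : Real.exp (n * δ) * (Real.exp (-n * Q q) * R q) =
        Real.exp (n * (δ - Q q)) * R q := by
      rw [← mul_assoc, ← Real.exp_add]
      ring_nf
    simp only [hexp]
    by_cases hqO : q ∈ O
    · have hR0 := hRO q hqO
      have h1 : (n : ℝ) * max (δ - Q q) 0 - 1 ≤ Real.exp (n * (δ - Q q)) := by
        rcases le_total (δ - Q q) 0 with h | h
        · rw [max_eq_right h]
          linarith [Real.exp_pos (n * (δ - Q q))]
        · rw [max_eq_left h]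
          linarith [Real.add_one_le_exp (n * (δ - Q q))]
      have h2 := mul_le_mul_of_nonneg_right h1 hR0
      rw [abs_of_nonneg hR0]
      simp only [S]
      linarith
    · rw [hout q hqO]
      by_cases hK : q ∈ tsupport R
      · have h1 : Real.exp (n * (δ - Q q)) ≤ 1 := by
          rw [Real.exp_le_one_iff]
          exact mul_nonpos_of_nonneg_of_nonpos n.cast_nonneg
            (sub_nonpos.2 (hδQ q ⟨hK, hqO⟩))
        have h2 : |Real.exp (n * (δ - Q q)) * R q| ≤ |R q| := by
          rw [abs_mul, abs_of_pos (Real.exp_pos _)]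
          exact mul_le_of_le_one_left (abs_nonneg _) h1
        linarith [neg_abs_le (Real.exp (n * (δ - Q q)) * R q)]
      · simp [image_eq_zero_of_notMem_tsupport hK]
  rw [integral_sub (hSi.const_mul _) hRi, integral_const_mul, integral_const_mul] at hle
  have : 0 < Real.exp (n * δ) * ∫ q, Real.exp (-n * Q q) * R q ∂μ := by linarith
  exact pos_of_mul_pos_right this (Real.exp_pos _).le

/-! ### Covariance of the Maxwell equations under isometries -/

lemma pd_comp_affine (L : Mat4) (p : Vec4) {f : Vec4 → ℝ} (hf : Differentiable ℝ f)
    (a : Fin 4) (q : Vec4) :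
    pd a (fun q => f (L *ᵥ (q - p))) q = ∑ d, L d a * pd d f (L *ᵥ (q - p)) := by
  have h1 : HasFDerivAt (fun q : Vec4 => L *ᵥ (q - p)) (L.mulVecLin.toContinuousLinearMap) q := by
    have := (L.mulVecLin.toContinuousLinearMap).hasFDerivAt.comp q
      ((hasFDerivAt_id q).sub_const p)
    simpa [Function.comp_def] using this
  have h2 := (hf (L *ᵥ (q - p))).hasFDerivAt.comp q h1
  have h3 : pd a (fun q => f (L *ᵥ (q - p))) q =
      fderiv ℝ f (L *ᵥ (q - p)) (L *ᵥ Pi.single a 1) := by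
    rw [pd, show (fun q => f (L *ᵥ (q - p))) = f ∘ fun q : Vec4 => L *ᵥ (q - p) from rfl, h2.fderiv]
    rfl
  have h4 : L *ᵥ Pi.single a 1 = ∑ d, L d a • (Pi.single d 1 : Vec4) := by
    ext i
    simp [Finset.sum_apply, Pi.single_apply]
  rw [h3, h4, map_sum]
  simp [pd]

/-- The pullback of a two-form field along `q ↦ L *ᵥ (q - p)`. -/
def pullback (L : Mat4) (p : Vec4) (F : Vec4 → Mat4) (q : Vec4) : Mat4 :=
  Lᵀ * F (L *ᵥ (q - p)) * L

lemma pullback_apply (L : Mat4) (p : Vec4) (F : Vec4 → Mat4) (q : Vec4) (b c : Fin 4) :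
    pullback L p F q b c = ∑ e, ∑ f, L e b * L f c * F (L *ᵥ (q - p)) e f := by
  simp only [pullback, Matrix.mul_apply, transpose_apply, Finset.sum_mul]
  rw [Finset.sum_comm]
  exact Finset.sum_congr rfl fun _ _ => Finset.sum_congr rfl fun _ _ => by ring

lemma SmoothMatField.pullback {F : Vec4 → Mat4} (hF : SmoothMatField F) (L : Mat4) (p : Vec4) :
    SmoothMatField (pullback L p F) := by
  intro b c
  simp only [pullback_apply]
  refine ContDiff.sum fun e _ => ContDiff.sum fun f _ => contDiff_const.mul ?_
  refine (hF e f).comp ?_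
  exact (L.mulVecLin.toContinuousLinearMap).contDiff.comp (contDiff_id.sub contDiff_const)

lemma pd_pullback {F : Vec4 → Mat4} (hF : SmoothMatField F) (L : Mat4) (p q : Vec4)
    (a b c : Fin 4) :
    pd a (fun q => pullback L p F q b c) q =
      ∑ d, ∑ e, ∑ f, L d a * L e b * L f c * pd d (fun y => F y e f) (L *ᵥ (q - p)) := by
  have hd : ∀ e f, Differentiable ℝ fun y => F y e f := fun e f =>
    (hF e f).differentiable (by simp)
  have hd' : ∀ e f, Differentiable ℝ fun q => F (L *ᵥ (q - p)) e f := fun e f =>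
    (hd e f).comp (((L.mulVecLin.toContinuousLinearMap).differentiable).comp
      (differentiable_id.sub_const p))
  have h1 : pd a (fun q => pullback L p F q b c) q =
      ∑ e, ∑ f, L e b * L f c * pd a (fun q => F (L *ᵥ (q - p)) e f) q := by
    simp only [pullback_apply]
    rw [pd, fderiv_fun_sum fun e _ => (Differentiable.fun_sum fun f _ =>
      (hd' e f).const_mul _).differentiableAt, _root_.sum_apply]
    refine Finset.sum_congr rfl fun e _ => ?_
    rw [fderiv_fun_sum fun f _ => ((hd' e f).const_mul _).differentiableAt,
      _root_.sum_apply]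
    refine Finset.sum_congr rfl fun f _ => ?_
    rw [fderiv_const_mul (hd' e f).differentiableAt]
    rfl
  simp only [h1, pd_comp_affine L p (hd _ _), Finset.mul_sum]
  refine (Finset.sum_congr rfl fun e _ => Finset.sum_comm).trans ?_
  rw [Finset.sum_comm]
  refine Finset.sum_congr rfl fun d _ => Finset.sum_congr rfl fun e _ =>
    Finset.sum_congr rfl fun f _ => by ring

lemma sum_E_mul {L : Mat4} (hL : L * E * Lᵀ = E) (d e : Fin 4) :
    ∑ a, E a a * (L d a * L e a) = E d e := by
  conv_rhs => rw [← hL]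
  simp [Matrix.mul_apply, E, Matrix.diagonal_apply, Fin.sum_univ_four]

lemma SolvesMaxwell.pullback {F : Vec4 → Mat4} (hF : SmoothMatField F) (hM : SolvesMaxwell F)
    {L : Mat4} (hL : L * E * Lᵀ = E) (p : Vec4) : SolvesMaxwell (pullback L p F) := by
  constructor
  · intro q b
    simp only [pd_pullback hF]
    set G : Fin 4 → Fin 4 → Fin 4 → ℝ := fun d e f => pd d (fun y => F y e f) (L *ᵥ (q - p))
    have hG : ∀ f, ∑ d, E d d * G d d f = 0 := hM.1 _
    calc ∑ a, E a a * ∑ d, ∑ e, ∑ f, L d a * L e a * L f b * G d e f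
        = ∑ d, ∑ e, ∑ f, (∑ a, E a a * (L d a * L e a)) * (L f b * G d e f) := by
          simp only [Finset.mul_sum, Finset.sum_mul]
          rw [Finset.sum_comm]
          refine Finset.sum_congr rfl fun d _ => ?_
          rw [Finset.sum_comm]
          refine Finset.sum_congr rfl fun e _ => ?_
          rw [Finset.sum_comm]
          exact Finset.sum_congr rfl fun f _ => Finset.sum_congr rfl fun a _ => by ring
      _ = ∑ f, L f b * ∑ d, E d d * G d d f := by
          simp only [sum_E_mul hL, Finset.mul_sum]
          rw [Finset.sum_comm (s := (Finset.univ : Finset (Fin 4)))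
            (f := fun f d => L f b * (E d d * G d d f))]
          refine Finset.sum_congr rfl fun d _ => ?_
          rw [Finset.sum_eq_single d]
          · exact Finset.sum_congr rfl fun f _ => by ring
          · intro e _ he
            simp [E, Matrix.diagonal_apply_ne _ he.symm]
          · simp
      _ = 0 := by simp [hG]
  · intro q a b c
    simp only [pd_pullback hF]
    set G : Fin 4 → Fin 4 → Fin 4 → ℝ := fun d e f => pd d (fun y => F y e f) (L *ᵥ (q - p))
    have hG : ∀ d e f, G d e f + G e f d + G f d e = 0 := hM.2 _
    have h2 : ∑ d, ∑ e, ∑ f, L d b * L e c * L f a * G d e f =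
        ∑ d, ∑ e, ∑ f, L d a * L e b * L f c * G e f d := by
      refine (Finset.sum_congr rfl fun e _ => Finset.sum_comm).trans ?_
      rw [Finset.sum_comm]
      exact Finset.sum_congr rfl fun d _ => Finset.sum_congr rfl fun e _ =>
        Finset.sum_congr rfl fun f _ => by ring
    have h3 : ∑ d, ∑ e, ∑ f, L d c * L e a * L f b * G d e f =
        ∑ d, ∑ e, ∑ f, L d a * L e b * L f c * G f d e := by
      rw [Finset.sum_comm]
      refine Finset.sum_congr rfl fun d _ => ?_
      rw [Finset.sum_comm]
      exact Finset.sum_congr rfl fun e _ => Finset.sum_congr rfl fun f _ => by ring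
    rw [h2, h3]
    simp only [← Finset.sum_add_distrib, ← mul_add]
    exact Finset.sum_eq_zero fun d _ => Finset.sum_eq_zero fun e _ =>
      Finset.sum_eq_zero fun f _ => by rw [hG, mul_zero]

lemma maxwellT_conj {L : Mat4} (hL : L * E * Lᵀ = E) (hL' : Lᵀ * E * L = E) (F : Mat4) :
    maxwellT (Lᵀ * F * L) = Lᵀ * maxwellT F * L := by
  have h1 : Lᵀ * F * L * E * (Lᵀ * F * L) = Lᵀ * (F * E * F) * L := by
    calc _ = Lᵀ * F * (L * E * Lᵀ) * F * L := by simp only [Matrix.mul_assoc]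
      _ = _ := by rw [hL]; simp only [Matrix.mul_assoc]
  have h2 : (E * (Lᵀ * F * L) * E * (Lᵀ * F * L)).trace = (E * F * E * F).trace := by
    calc _ = (E * (Lᵀ * F * L * E * (Lᵀ * F * L))).trace := by simp only [Matrix.mul_assoc]
      _ = (E * Lᵀ * (F * E * F) * L).trace := by rw [h1]; simp only [Matrix.mul_assoc]
      _ = (L * E * Lᵀ * (F * E * F)).trace := by rw [Matrix.trace_mul_comm]; simp only [Matrix.mul_assoc]
      _ = _ := by rw [hL]; simp only [Matrix.mul_assoc]
  rw [maxwellT, h1, h2, maxwellT, Matrix.mul_sub, Matrix.sub_mul, Matrix.mul_smul, Matrix.smul_mul,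
    hL']

/-! ### An exact Gaussian beam solution of the Maxwell equations -/

/-- The complexified null coordinate `t + z + i`. -/
def beamS (y : Vec4) : ℂ := (y 0 : ℂ) + y 3 + Complex.I

/-- The transverse Bateman coordinate. -/
def beamβ (y : Vec4) : ℂ := ((y 1 : ℂ) + y 2 * Complex.I) / beamS y

/-- The longitudinal Bateman coordinate, a complex solution of the eikonal equation. -/
def beamα (y : Vec4) : ℂ :=
  (y 0 : ℂ) - y 3 - ((y 1 : ℂ) - y 2 * Complex.I) * beamβ y

/-- The complex amplitude of the beam. -/
def beamA (n ε : ℝ) (y : Vec4) : ℂ :=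
  Complex.exp (n * (Complex.I * beamα y - ε * beamα y ^ 2)) / beamS y

def beamX (b : ℂ) : Fin 4 → ℂ := ![1, -b, Complex.I * b, -1]

def beamY (b : ℂ) : Fin 4 → ℂ := ![-b, 1, Complex.I, -b]

/-- The real part of the self-dual null two-form `A • X ∧ Y`. -/
def nullForm (A b : ℂ) : Mat4 :=
  Matrix.of fun i j => (A * (beamX b i * beamY b j - beamX b j * beamY b i)).re

def beamField (n ε : ℝ) (y : Vec4) : Mat4 := nullForm (beamA n ε y) (beamβ y)

lemma beamS_ne_zero (y : Vec4) : beamS y ≠ 0 := by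
  intro h
  simpa [beamS] using congrArg Complex.im h

lemma contDiff_coord (i : Fin 4) : ContDiff ℝ (⊤ : ℕ∞) fun y : Vec4 => (y i : ℂ) :=
  Complex.ofRealCLM.contDiff.comp (contDiff_apply ℝ ℝ i)

lemma contDiff_beamS : ContDiff ℝ (⊤ : ℕ∞) beamS :=
  ((contDiff_coord 0).add (contDiff_coord 3)).add contDiff_const

lemma contDiff_beamβ : ContDiff ℝ (⊤ : ℕ∞) beamβ :=
  ((contDiff_coord 1).add ((contDiff_coord 2).mul contDiff_const)).mul
    (contDiff_beamS.inv beamS_ne_zero)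

lemma contDiff_beamα : ContDiff ℝ (⊤ : ℕ∞) beamα :=
  ((contDiff_coord 0).sub (contDiff_coord 3)).sub
    (((contDiff_coord 1).sub ((contDiff_coord 2).mul contDiff_const)).mul contDiff_beamβ)

lemma contDiff_beamA (n ε : ℝ) : ContDiff ℝ (⊤ : ℕ∞) (beamA n ε) :=
  (contDiff_const.mul ((contDiff_const.mul contDiff_beamα).sub
    (contDiff_const.mul (contDiff_beamα.pow 2)))).cexp.mul (contDiff_beamS.inv beamS_ne_zero)

lemma contDiff_beamX (i : Fin 4) : ContDiff ℝ (⊤ : ℕ∞) fun y => beamX (beamβ y) i := by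
  fin_cases i <;> simp [beamX, contDiff_const, contDiff_beamβ.neg,
    contDiff_const.mul contDiff_beamβ]

lemma contDiff_beamY (i : Fin 4) : ContDiff ℝ (⊤ : ℕ∞) fun y => beamY (beamβ y) i := by
  fin_cases i <;> simp [beamY, contDiff_const, contDiff_beamβ.neg]

lemma smooth_beamField (n ε : ℝ) : SmoothMatField (beamField n ε) := fun i j =>
  Complex.reCLM.contDiff.comp ((contDiff_beamA n ε).mul
    (((contDiff_beamX i).mul (contDiff_beamY j)).sub ((contDiff_beamX j).mul (contDiff_beamY i))))

lemma nullForm_transpose (A b : ℂ) : (nullForm A b)ᵀ = -nullForm A b := by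
  ext i j
  simp only [nullForm, transpose_apply, Matrix.neg_apply, of_apply, ← Complex.neg_re]
  ring_nf

/-- The real null covector whose square is the stress-energy of `nullForm`. -/
def nullCov (b : ℂ) : Vec4 :=
  ![1 + Complex.normSq b, -2 * b.re, -2 * b.im, Complex.normSq b - 1]

lemma nullForm_eq (A b : ℂ) : nullForm A b =
    !![0, (A * (1 - b ^ 2)).re, -(A * (1 + b ^ 2)).im, -2 * (A * b).re;
      -(A * (1 - b ^ 2)).re, 0, 2 * (A * b).im, (A * (1 + b ^ 2)).re;
      (A * (1 + b ^ 2)).im, -2 * (A * b).im, 0, -(A * (1 - b ^ 2)).im;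
      2 * (A * b).re, -(A * (1 + b ^ 2)).re, (A * (1 - b ^ 2)).im, 0] := by
  ext i j
  fin_cases i <;> fin_cases j <;> simp [nullForm, beamX, beamY, pow_two] <;>
    ring_nf
  simp

set_option maxHeartbeats 1000000 in
lemma maxwellT_nullForm (A b : ℂ) :
    maxwellT (nullForm A b) = Complex.normSq A • vecMulVec (nullCov b) (nullCov b) := by
  have hE : E = !![1, 0, 0, 0; 0, -1, 0, 0; 0, 0, -1, 0; 0, 0, 0, -1] := by
    ext i j
    fin_cases i <;> fin_cases j <;> rfl
  obtain ⟨a1, a2⟩ := A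
  obtain ⟨b1, b2⟩ := b
  rw [nullForm_eq, maxwellT, hE]
  simp only [pow_two, Complex.mul_re, Complex.mul_im, Complex.add_re, Complex.add_im,
    Complex.sub_re, Complex.sub_im, Complex.one_re, Complex.one_im, nullCov, Complex.normSq_mk]
  ext i j
  fin_cases i <;> fin_cases j <;>
  · simp [Fin.sum_univ_four, Matrix.trace]
    ring

lemma nullCov_pos (b : ℂ) : PosCovector (nullCov b) := by
  refine posCovector_of_null ?_ ?_
  · simpa [nullCov] using add_nonneg zero_le_one (Complex.normSq_nonneg b)
  · simp [nullCov, Complex.normSq_apply]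
    ring

def beamV : Fin 4 → ℂ := ![1, 0, 0, 1]
def beamWbar : Fin 4 → ℂ := ![0, 1, -Complex.I, 0]

lemma hasDerivAt_coord (y : Vec4) (a i : Fin 4) :
    HasDerivAt (fun t : ℝ => (((y + t • (Pi.single a 1 : Vec4)) i : ℝ) : ℂ))
      ((Pi.single a 1 : Vec4) i : ℝ) 0 := by
  refine HasDerivAt.ofReal_comp ?_
  simpa using ((hasDerivAt_id (0 : ℝ)).mul_const ((Pi.single a 1 : Vec4) i)).const_add (y i)

lemma hasDerivAt_beamS (y : Vec4) (a : Fin 4) :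
    HasDerivAt (fun t : ℝ => beamS (y + t • (Pi.single a 1 : Vec4))) (beamV a) 0 := by
  refine (((hasDerivAt_coord y a 0).fun_add (hasDerivAt_coord y a 3)).add_const
    Complex.I).congr_deriv ?_
  fin_cases a <;> simp [beamV]

lemma hasDerivAt_beamβ (y : Vec4) (a : Fin 4) :
    HasDerivAt (fun t : ℝ => beamβ (y + t • (Pi.single a 1 : Vec4)))
      (beamY (beamβ y) a / beamS y) 0 := by
  have hs := beamS_ne_zero y
  refine (((hasDerivAt_coord y a 1).fun_add
    ((hasDerivAt_coord y a 2).mul_const Complex.I)).fun_div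
      (hasDerivAt_beamS y a) (by simpa using hs)).congr_deriv ?_
  fin_cases a <;> simp [beamY, beamV, beamβ] <;> field_simp <;> ring

lemma hasDerivAt_beamα (y : Vec4) (a : Fin 4) :
    HasDerivAt (fun t : ℝ => beamα (y + t • (Pi.single a 1 : Vec4)))
      (beamX (beamβ y) a - ((y 1 : ℂ) - y 2 * Complex.I) * (beamY (beamβ y) a / beamS y)) 0 := by
  refine (((hasDerivAt_coord y a 0).fun_sub (hasDerivAt_coord y a 3)).fun_sub
    (((hasDerivAt_coord y a 1).fun_sub ((hasDerivAt_coord y a 2).mul_const Complex.I)).fun_mul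
      (hasDerivAt_beamβ y a))).congr_deriv ?_
  fin_cases a <;> simp [beamX] <;> ring

/-- The logarithmic derivative of the amplitude of the beam along its first argument. -/
def beamDA (n ε : ℝ) (y : Vec4) (a : Fin 4) : ℂ :=
  n * (Complex.I - 2 * ε * beamα y) *
    (beamX (beamβ y) a - ((y 1 : ℂ) - y 2 * Complex.I) * (beamY (beamβ y) a / beamS y)) -
    beamV a / beamS y

lemma hasDerivAt_beamA (n ε : ℝ) (y : Vec4) (a : Fin 4) :
    HasDerivAt (fun t : ℝ => beamA n ε (y + t • (Pi.single a 1 : Vec4)))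
      (beamA n ε y * beamDA n ε y a) 0 := by
  have hs := beamS_ne_zero y
  have hα := hasDerivAt_beamα y a
  refine (((((hα.const_mul Complex.I).fun_sub ((hα.fun_pow 2).const_mul (ε : ℂ))).const_mul
    (n : ℂ)).cexp).fun_div (hasDerivAt_beamS y a) (by simpa using hs)).congr_deriv ?_
  simp [beamA, beamDA]
  field_simp

lemma hasDerivAt_beamX (y : Vec4) (a i : Fin 4) :
    HasDerivAt (fun t : ℝ => beamX (beamβ (y + t • (Pi.single a 1 : Vec4))) i)
      (-beamWbar i * (beamY (beamβ y) a / beamS y)) 0 := by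
  have h := hasDerivAt_beamβ y a
  fin_cases i
  · simpa [beamX, beamWbar] using hasDerivAt_const (0 : ℝ) (1 : ℂ)
  · simpa [beamX, beamWbar] using h.fun_neg
  · simpa [beamX, beamWbar] using h.const_mul Complex.I
  · simpa [beamX, beamWbar] using hasDerivAt_const (0 : ℝ) (-1 : ℂ)

lemma hasDerivAt_beamY (y : Vec4) (a i : Fin 4) :
    HasDerivAt (fun t : ℝ => beamY (beamβ (y + t • (Pi.single a 1 : Vec4))) i)
      (-beamV i * (beamY (beamβ y) a / beamS y)) 0 := by
  have h := hasDerivAt_beamβ y a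
  fin_cases i
  · simpa [beamY, beamV] using h.fun_neg
  · simpa [beamY, beamV] using hasDerivAt_const (0 : ℝ) (1 : ℂ)
  · simpa [beamY, beamV] using hasDerivAt_const (0 : ℝ) Complex.I
  · simpa [beamY, beamV] using h.fun_neg

/-- The complex expression whose real part is the derivative of `beamField`. -/
def beamDF (n ε : ℝ) (y : Vec4) (a i j : Fin 4) : ℂ :=
  beamA n ε y * beamDA n ε y a *
    (beamX (beamβ y) i * beamY (beamβ y) j - beamX (beamβ y) j * beamY (beamβ y) i) +
  beamA n ε y * (beamY (beamβ y) a / beamS y) *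
    ((-beamWbar i * beamY (beamβ y) j - beamX (beamβ y) i * beamV j) -
      (-beamWbar j * beamY (beamβ y) i - beamX (beamβ y) j * beamV i))

lemma pd_beamField (n ε : ℝ) (y : Vec4) (a i j : Fin 4) :
    pd a (fun q => beamField n ε q i j) y = (beamDF n ε y a i j).re := by
  have hd : DifferentiableAt ℝ (fun q => beamField n ε q i j) y :=
    (smooth_beamField n ε i j).differentiable (by simp) y
  rw [pd, ← hd.lineDeriv_eq_fderiv]
  refine HasLineDerivAt.lineDeriv ?_
  have h := (hasDerivAt_beamA n ε y a).fun_mul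
    (((hasDerivAt_beamX y a i).fun_mul (hasDerivAt_beamY y a j)).fun_sub
      ((hasDerivAt_beamX y a j).fun_mul (hasDerivAt_beamY y a i)))
  refine (Complex.reCLM.hasFDerivAt.comp_hasDerivAt (0 : ℝ) h).congr_deriv ?_
  simp only [zero_smul, add_zero, Complex.reCLM_apply, beamDF]
  congr 1
  ring

lemma solvesMaxwell_beamField (n ε : ℝ) : SolvesMaxwell (beamField n ε) := by
  constructor
  · intro y b
    simp only [pd_beamField]
    have : ∑ a, (E a a : ℂ) * beamDF n ε y a a b = 0 := by
      simp only [Fin.sum_univ_four, beamDF, beamDA]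
      generalize beamA n ε y = A
      generalize (n * (Complex.I - 2 * ε * beamα y) : ℂ) = g
      generalize ((y 1 : ℂ) - y 2 * Complex.I) = w
      generalize beamβ y = β
      simp only [div_eq_mul_inv]
      generalize (beamS y)⁻¹ = σ
      fin_cases b <;> simp [E, beamX, beamY, beamV, beamWbar] <;> ring_nf <;>
        simp only [Complex.I_sq] <;> ring
    have h2 := congrArg Complex.re this
    simpa only [Complex.re_sum, Complex.re_ofReal_mul, Complex.zero_re] using h2
  · intro y a b c
    simp only [pd_beamField, ← Complex.add_re]
    rw [← Complex.zero_re]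
    congr 1
    simp only [beamDF, beamDA]
    ring

/-- The exponential rate at which the energy density of the beam decays in `n`. -/
def beamRate (ε : ℝ) (y : Vec4) : ℝ :=
  2 * ((beamα y).im + ε * ((beamα y).re ^ 2 - (beamα y).im ^ 2))

lemma normSq_beamA (n ε : ℝ) (y : Vec4) :
    Complex.normSq (beamA n ε y) =
      Real.exp (-n * beamRate ε y) / Complex.normSq (beamS y) := by
  rw [beamA, Complex.normSq_div, Complex.normSq_eq_norm_sq, Complex.norm_exp, ← Real.exp_nat_mul]
  congr 2
  simp [beamRate, pow_two]
  ring

lemma beamα_im (y : Vec4) :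
    (beamα y).im = (y 1 ^ 2 + y 2 ^ 2) / Complex.normSq (beamS y) := by
  have h : Complex.normSq (beamS y) ≠ 0 := by simpa using beamS_ne_zero y
  simp only [beamα, beamβ, Complex.sub_im, Complex.mul_im, Complex.mul_re, Complex.div_im,
    Complex.div_re, Complex.sub_re, Complex.add_re, Complex.add_im, Complex.ofReal_re,
    Complex.ofReal_im, Complex.I_re, Complex.I_im]
  field_simp
  simp [beamS]
  ring

lemma beamα_im_nonneg (y : Vec4) : 0 ≤ (beamα y).im := by
  rw [beamα_im]
  exact div_nonneg (by positivity) (Complex.normSq_nonneg _)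

lemma eq_of_beamα_eq_zero {y : Vec4} (h : beamα y = 0) : y = y 0 • ![1, 0, 0, 1] := by
  have him : (beamα y).im = 0 := by rw [h, Complex.zero_im]
  have hs : Complex.normSq (beamS y) ≠ 0 := by simpa using beamS_ne_zero y
  rw [beamα_im, div_eq_zero_iff, or_iff_left hs] at him
  have h1 : y 1 = 0 := by nlinarith [sq_nonneg (y 1), sq_nonneg (y 2)]
  have h2 : y 2 = 0 := by nlinarith [sq_nonneg (y 1), sq_nonneg (y 2)]
  have h3 : y 0 - y 3 = 0 := by simpa [beamα, h1, h2] using congrArg Complex.re h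
  ext i
  fin_cases i <;> simp [h1, h2]
  linarith

lemma beamα_smul (t : ℝ) : beamα (t • ![1, 0, 0, 1]) = 0 := by
  simp [beamα]

lemma eq_zero_of_beamRate_nonpos {M : ℝ} {y : Vec4} (hM : 0 < M) (hy : (beamα y).im ≤ M)
    (h : beamRate (1 / (2 * M)) y ≤ 0) : beamα y = 0 := by
  have h0 := beamα_im_nonneg y
  rw [beamRate] at h
  set a := (beamα y).re with ha
  set b := (beamα y).im with hb
  have h1 : 1 / (2 * M) * (a ^ 2 - b ^ 2) = (a ^ 2 - b ^ 2) / (2 * M) := by ring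
  have h2 : b + (a ^ 2 - b ^ 2) / (2 * M) = (2 * M * b + a ^ 2 - b ^ 2) / (2 * M) := by
    field_simp
    ring
  rw [h1, h2] at h
  have h3 : 2 * M * b + a ^ 2 - b ^ 2 ≤ 0 := by
    by_contra! hc
    have : 0 < (2 * M * b + a ^ 2 - b ^ 2) / (2 * M) := by positivity
    linarith
  have h4 : b * b ≤ M * b := mul_le_mul_of_nonneg_right hy h0
  have hb0 : b = 0 := by
    have : M * b ≤ 0 := by nlinarith [sq_nonneg a]
    nlinarith
  have ha0 : a = 0 := by
    rw [hb0] at h3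
    nlinarith
  exact Complex.ext ha0 hb0

/-! ### Rotating a null direction to a standard one -/

/-- A spatial reflection moves any future null vector into the direction `(1, 0, 0, 1)`. -/
lemma exists_reflection {u : Vec4} (hu : FutureNull u) :
    ∃ L : Mat4, L * L = 1 ∧ L * E * Lᵀ = E ∧ Lᵀ * E * L = E ∧
      (∀ ξ : Vec4, (L *ᵥ ξ) 0 = ξ 0) ∧ L *ᵥ u = u 0 • ![1, 0, 0, 1] := by
  obtain ⟨-, hnull, -⟩ := hu
  rw [mink] at hnull
  set d : Vec4 := ![0, u 1, u 2, u 3 - u 0] with hd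
  set N : ℝ := d ⬝ᵥ d with hN
  set D : Mat4 := vecMulVec d d with hD
  have hDD : D * D = N • D := by
    rw [hD, vecMulVec_mul_vecMulVec, vecMulVec_smul]
  have hEd : E *ᵥ d = -d := by
    ext i
    fin_cases i <;> simp [E, hd, Matrix.mulVec_diagonal]
  have hdE : d ᵥ* E = -d := by
    ext i
    fin_cases i <;> simp [E, hd, Matrix.vecMul_diagonal]
  have hED : E * D = -D := by
    rw [hD, mul_vecMulVec, hEd, neg_vecMulVec]
  have hDE : D * E = -D := by
    rw [hD, vecMulVec_mul, hdE, vecMulVec_neg]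
  have hDT : Dᵀ = D := by rw [hD, transpose_vecMulVec]
  set L : Mat4 := 1 - (2 / N) • D with hL
  have hLL : L * L = 1 := by
    have hk : 2 / N * (2 / N) * N = 2 * (2 / N) := by
      by_cases h : N = 0
      · simp [h]
      · field_simp
    rw [hL, Matrix.sub_mul, Matrix.mul_sub, Matrix.mul_sub, Matrix.mul_one, Matrix.one_mul,
      Matrix.mul_one, Matrix.smul_mul, Matrix.mul_smul, hDD, smul_smul, smul_smul, hk]
    module
  have hLT : Lᵀ = L := by simp [hL, hDT]
  have hEL : E * L = L * E := by
    simp [hL, Matrix.mul_sub, Matrix.sub_mul, hED, hDE]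
  have hLEL : L * E * L = E := by
    rw [Matrix.mul_assoc, hEL, ← Matrix.mul_assoc, hLL, Matrix.one_mul]
  refine ⟨L, hLL, by rw [hLT, hLEL], by rw [hLT, hLEL], fun ξ => ?_, ?_⟩
  · rw [hL, Matrix.sub_mulVec, Matrix.one_mulVec, Matrix.smul_mulVec, hD, vecMulVec_mulVec]
    simp [hd]
  · have hNu : N = 2 * (d ⬝ᵥ u) := by
      simp only [hN, dotProduct, Fin.sum_univ_four, hd]
      simp
      linarith
    have hkd : (2 / N * (d ⬝ᵥ u)) • d = d := by
      by_cases h : N = 0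
      · rw [hN, dotProduct_self_eq_zero] at h
        simp [h]
      · rw [show 2 / N * (d ⬝ᵥ u) = 1 by field_simp; exact hNu.symm, one_smul]
    have : L *ᵥ u = u - d := by
      conv_rhs => rw [← hkd]
      rw [hL, Matrix.sub_mulVec, Matrix.one_mulVec, Matrix.smul_mulVec, hD, vecMulVec_mulVec]
      ext i
      simp
      ring
    rw [this]
    ext i
    fin_cases i <;> simp [hd]

lemma mink_eq_dotProduct (x y : Vec4) : mink x y = x ⬝ᵥ (E *ᵥ y) := by
  simp [mink, E, dotProduct, Fin.sum_univ_four, Matrix.mulVec_diagonal]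
  ring

lemma PosCovector.transpose_mulVec {L : Mat4} (hL : Lᵀ * E * L = E)
    (h0 : ∀ ξ : Vec4, (L *ᵥ ξ) 0 = ξ 0) {m : Vec4} (hm : PosCovector m) :
    PosCovector (Lᵀ *ᵥ m) := by
  rintro ξ ⟨h1, h2⟩
  have hξ : FutureCausal (L *ᵥ ξ) := by
    refine ⟨?_, by rwa [h0]⟩
    rw [mink_eq_dotProduct, mulVec_mulVec, dotProduct_comm, dotProduct_mulVec, ← mulVec_transpose,
      mulVec_mulVec, ← Matrix.mul_assoc, hL, dotProduct_comm, ← mink_eq_dotProduct]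
    exact h1
  have h3 := hm _ hξ
  change 0 ≤ m ⬝ᵥ L *ᵥ ξ at h3
  change 0 ≤ (Lᵀ *ᵥ m) ⬝ᵥ ξ
  rwa [mulVec_transpose, ← dotProduct_mulVec]

lemma maxwellT_pullback_beamField {L : Mat4} (hL : L * E * Lᵀ = E) (hL' : Lᵀ * E * L = E)
    (n ε : ℝ) (p q : Vec4) :
    maxwellT (pullback L p (beamField n ε) q) =
      Complex.normSq (beamA n ε (L *ᵥ (q - p))) •
        vecMulVec (Lᵀ *ᵥ nullCov (beamβ (L *ᵥ (q - p))))
          (Lᵀ *ᵥ nullCov (beamβ (L *ᵥ (q - p)))) := by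
  rw [pullback, maxwellT_conj hL hL', beamField, maxwellT_nullForm, Matrix.mul_smul,
    Matrix.smul_mul, mul_vecMulVec, vecMulVec_mul, ← mulVec_transpose]

lemma pullback_beamField_mem {L : Mat4} (hL : L * E * Lᵀ = E) (n ε : ℝ) (p : Vec4) :
    (fun q => maxwellT (pullback L p (beamField n ε) q)) ∈ maxwellC := by
  refine ⟨pullback L p (beamField n ε), (smooth_beamField n ε).pullback L p, fun q => ?_,
    (solvesMaxwell_beamField n ε).pullback (smooth_beamField n ε) hL p, rfl⟩
  simp only [pullback, beamField, transpose_mul, nullForm_transpose, transpose_transpose,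
    Matrix.mul_assoc, Matrix.neg_mul, Matrix.mul_neg]

lemma continuous_nullCov : Continuous nullCov := by
  refine continuous_pi fun i => ?_
  have h := Complex.continuous_normSq
  fin_cases i <;> simp [nullCov] <;> fun_prop

/-- Source-free Maxwell fields track null geodesics. -/
theorem maxwell_tracks_null_geodesics (p : Vec4) (u : Vec4) (hu : FutureNull u) :
    Tracks maxwellC (fun t => p + t • u) := by
  intro x hx hxc _ ⟨O, hO, hγO, hxO⟩ ⟨t₀, ht₀⟩
  obtain ⟨L, hLL, hL, hL', hL0, hLu⟩ := exists_reflection hu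
  let y : Vec4 → Vec4 := fun q => L *ᵥ (q - p)
  have hy : Continuous y := by fun_prop
  have hyγ : ∀ t : ℝ, y (p + t • u) = (t * u 0) • ![1, 0, 0, 1] := fun t => by
    simp only [y, add_sub_cancel_left, mulVec_smul, hLu, smul_smul]
  let m : Vec4 → Vec4 := fun q => Lᵀ *ᵥ nullCov (beamβ (y q))
  have hm : Continuous m := by
    have := continuous_nullCov.comp (contDiff_beamβ.continuous.comp hy)
    exact Continuous.matrix_mulVec continuous_const this
  have hmpos : ∀ q, PosCovector (m q) := fun q => (nullCov_pos _).transpose_mulVec hL' hL0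
  have hm0 : ∀ q, m q ≠ 0 := by
    intro q h
    have h1 : Lᵀ *ᵥ m q = nullCov (beamβ (y q)) := by
      rw [mulVec_mulVec, ← transpose_mul, hLL, transpose_one, one_mulVec]
    rw [h, mulVec_zero] at h1
    have h2 : (0 : ℝ) = 1 + Complex.normSq (beamβ (y q)) := congrFun h1 0
    linarith [Complex.normSq_nonneg (beamβ (y q))]
  have hs : ∀ q, 0 < Complex.normSq (beamS (y q)) := fun q =>
    Complex.normSq_pos.2 (beamS_ne_zero _)
  let R : Vec4 → ℝ := fun q => quad (x q) (m q) / Complex.normSq (beamS (y q))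
  have hR : Continuous R := by
    have hmi : ∀ i, Continuous fun q => m q i := fun i => (continuous_apply i).comp hm
    refine Continuous.div ?_
      (Complex.continuous_normSq.comp (contDiff_beamS.continuous.comp hy)) fun q => (hs q).ne'
    exact continuous_finsetSum _ fun i _ => continuous_finsetSum _ fun j _ =>
      ((hmi i).mul (hmi j)).mul (hx i j).continuous
  have hRc : HasCompactSupport R := by
    refine hxc.mono fun q hq hxq => hq ?_
    simp [R, quad, hxq]
  have hα : Continuous fun q => beamα (y q) := contDiff_beamα.continuous.comp hy
  obtain ⟨M, hM⟩ := (hRc.isCompact.bddAbove_image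
    (Complex.continuous_im.comp hα).continuousOn)
  have hMpos : 0 < max M 1 := lt_max_of_lt_right one_pos
  obtain ⟨n, hn⟩ := exists_pos_integral_exp_mul (μ := volume) (R := R) (O := O)
    (q₀ := p + t₀ • u) (Q := fun q => beamRate (1 / (2 * max M 1)) (y q))
    (by
      have hre := Complex.continuous_re.comp hα
      have him := Complex.continuous_im.comp hα
      exact continuous_const.mul (him.add (continuous_const.mul ((hre.pow 2).sub (him.pow 2)))))
    hR hRc hO
    (fun q hq => div_nonneg (quad_nonneg (hxO q hq) (hmpos q)) (hs q).le)
    (by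
      rintro q ⟨hqK, hqO⟩
      by_contra! hc
      have h0 := eq_of_beamα_eq_zero (eq_zero_of_beamRate_nonpos hMpos
        ((hM (Set.mem_image_of_mem _ hqK)).trans (le_max_left _ _)) hc)
      refine hqO (hγO ⟨y q 0 / u 0, ?_⟩)
      have h1 : y (p + (y q 0 / u 0) • u) = y q := by
        rw [hyγ, div_mul_cancel₀ _ hu.2.2.ne', ← h0]
      have h2 := congrArg (L *ᵥ ·) h1
      simp only [y, mulVec_mulVec, hLL, one_mulVec] at h2
      exact sub_left_injective h2)
    (by rw [hyγ, beamRate, beamα_smul]; simp)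
    (div_pos (quad_pos ht₀ (hmpos _) (hm0 _)) (hs _))
  refine ⟨_, pullback_beamField_mem hL n (1 / (2 * max M 1)) p, ?_⟩
  convert hn using 3 with q
  rw [maxwellT_pullback_beamField hL hL', minner_smul_vecMulVec, normSq_beamA]
  simp only [R, m, y]
  ring
end
end

section
/- Source-free Maxwell fields track no timelike geodesics (flat-space version): let 𝒞 be the collection of stress-energy tensors T[F] of all smooth fields F : ℝ⁴ → Matrix (Fin 4) (Fin 4) ℝ with antisymmetric values solving the source-free Maxwell equations. Then for every p ∈ ℝ⁴ and every unit timelike u ∈ ℝ⁴, the collection 𝒞 does NOT track the timelike geodesic γ : t ↦ p + t • u. -/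
open Matrix MeasureTheory Filter Topology

noncomputable section

/-! ### Coordinate derivatives -/

lemma pd_add {f g : Vec4 → ℝ} {q : Vec4} (a : Fin 4) (hf : DifferentiableAt ℝ f q)
    (hg : DifferentiableAt ℝ g q) : pd a (fun y => f y + g y) q = pd a f q + pd a g q := by
  simp [pd, fderiv_fun_add hf hg]

lemma pd_mul {f g : Vec4 → ℝ} {q : Vec4} (a : Fin 4) (hf : DifferentiableAt ℝ f q)
    (hg : DifferentiableAt ℝ g q) :
    pd a (fun y => f y * g y) q = pd a f q * g q + f q * pd a g q := by
  simp [pd, fderiv_fun_mul hf hg]; ring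

lemma pd_comp {φ : ℝ → ℝ} {f : Vec4 → ℝ} {q : Vec4} (a : Fin 4)
    (hφ : DifferentiableAt ℝ φ (f q)) (hf : DifferentiableAt ℝ f q) :
    pd a (fun y => φ (f y)) q = deriv φ (f q) * pd a f q := by
  have h := hφ.hasDerivAt.comp_hasFDerivAt q hf.hasFDerivAt
  have h' : fderiv ℝ (fun y => φ (f y)) q = deriv φ (f q) • fderiv ℝ f q := h.fderiv
  simp [pd, h']

lemma pd_const (a : Fin 4) (c : ℝ) (q : Vec4) : pd a (fun _ => c) q = 0 := by simp [pd]

lemma pd_sum {ι : Type*} (s : Finset ι) {f : ι → Vec4 → ℝ} {q : Vec4} (a : Fin 4)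
    (hf : ∀ i ∈ s, DifferentiableAt ℝ (f i) q) :
    pd a (fun y => ∑ i ∈ s, f i y) q = ∑ i ∈ s, pd a (f i) q := by
  simp [pd, fderiv_fun_sum hf]

lemma pd_coord_sub (a b : Fin 4) (p q : Vec4) :
    pd a (fun y => y b - p b) q = if a = b then 1 else 0 := by
  have h : HasFDerivAt (fun y : Vec4 => y b - p b)
      (ContinuousLinearMap.proj (R := ℝ) (φ := fun _ : Fin 4 => ℝ) b) q :=
    (hasFDerivAt_apply b q).sub_const _
  rw [pd, h.fderiv]
  simp [Pi.single_apply, eq_comm]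

lemma pd_congr {f g : Vec4 → ℝ} {q : Vec4} (a : Fin 4) (h : f =ᶠ[𝓝 q] g) :
    pd a f q = pd a g q := by
  rw [pd, pd, h.fderiv_eq]

lemma ContDiff.pd {f : Vec4 → ℝ} (hf : ContDiff ℝ (⊤ : ℕ∞) f) (a : Fin 4) :
    ContDiff ℝ (⊤ : ℕ∞) (pd a f) :=
  (hf.fderiv_right (m := ((⊤ : ℕ∞) : WithTop ℕ∞)) (by simp)).clm_apply contDiff_const

lemma ContDiff.differentiableAt_top {V : Type*} [NormedAddCommGroup V] [NormedSpace ℝ V]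
    {f : V → ℝ} (hf : ContDiff ℝ (⊤ : ℕ∞) f) (q : V) : DifferentiableAt ℝ f q :=
  hf.differentiable (by simp) q

/-! ### Stress-energy of Maxwell fields -/

lemma E_apply (a b : Fin 4) : E a b = if a = b then E a a else 0 := by
  by_cases h : a = b <;> simp [E, h]

lemma E_zero_zero : E 0 0 = 1 := by simp [E]
lemma E_one_one : E 1 1 = -1 := by simp [E]
lemma E_two_two : E 2 2 = -1 := by simp [E]
lemma E_three_three : E 3 3 = -1 := by simp [E]

lemma mul_E_apply (A : Mat4) (a b : Fin 4) : (A * E) a b = A a b * E b b := by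
  rw [E, Matrix.mul_diagonal, Matrix.diagonal_apply_eq]

lemma E_mul_apply (A : Mat4) (a b : Fin 4) : (E * A) a b = E a a * A a b := by
  rw [E, Matrix.diagonal_mul, Matrix.diagonal_apply_eq]

lemma maxwellT_apply (F : Mat4) (a b : Fin 4) :
    maxwellT F a b = (∑ c, E c c * (F a c * F c b))
      - (1/4 : ℝ) * E a b * ∑ c, ∑ d, E c c * E d d * (F c d * F d c) := by
  have h1 : (F * E * F) a b = ∑ c, E c c * (F a c * F c b) := by
    simp only [Matrix.mul_apply (M := F * E) (N := F), mul_E_apply]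
    exact Finset.sum_congr rfl fun c _ => by ring
  have h2 : ((1/4 : ℝ) * (E * F * E * F).trace)
      = (1/4 : ℝ) * ∑ c, ∑ d, E c c * E d d * (F c d * F d c) := by
    simp only [Matrix.trace, Matrix.diag_apply, Matrix.mul_apply (M := E * F * E) (N := F), mul_E_apply,
      E_mul_apply]
    congr 1
    exact Finset.sum_congr rfl fun c _ => Finset.sum_congr rfl fun d _ => by ring
  rw [maxwellT, Matrix.sub_apply, Matrix.smul_apply, h1, h2, smul_eq_mul]
  ring

lemma maxwellT_symm {F : Mat4} (hF : Fᵀ = -F) (a b : Fin 4) :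
    maxwellT F a b = maxwellT F b a := by
  have h : ∀ i j, F i j = -F j i := fun i j => by
    have := congrFun (congrFun hF j) i
    simpa using this
  rw [maxwellT_apply, maxwellT_apply, E_apply a b, E_apply b a]
  have h1 : ∑ c, E c c * (F a c * F c b) = ∑ c, E c c * (F b c * F c a) :=
    Finset.sum_congr rfl fun c _ => by rw [h a c, h c b]; ring
  rw [h1]
  by_cases hab : a = b
  · simp [hab]
  · simp [hab, Ne.symm hab]

lemma maxwellT_traceless (F : Mat4) : ∑ a, ∑ b, maxwellT F a b * E a b = 0 := by
  have h : ∀ a, ∑ b, maxwellT F a b * E a b = maxwellT F a a * E a a := fun a => by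
    rw [Finset.sum_eq_single a (fun b _ hb => by rw [E_apply a b, if_neg (Ne.symm hb), mul_zero])
      (by simp)]
  rw [Finset.sum_congr rfl fun a _ => h a]
  simp only [maxwellT_apply, Fin.sum_univ_four, E_zero_zero, E_one_one, E_two_two,
    E_three_three]
  ring

lemma contDiff_maxwellT {F : Vec4 → Mat4}
    (hF : ∀ a b : Fin 4, ContDiff ℝ (⊤ : ℕ∞) fun p => F p a b) (a b : Fin 4) :
    ContDiff ℝ (⊤ : ℕ∞) fun p => maxwellT (F p) a b := by
  simp only [maxwellT_apply]
  refine ContDiff.sub (ContDiff.sum fun c _ => contDiff_const.mul ((hF _ _).mul (hF _ _)))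
    (contDiff_const.mul (ContDiff.sum fun c _ => ContDiff.sum fun d _ =>
      contDiff_const.mul ((hF _ _).mul (hF _ _))))

lemma pd_maxwellT {F : Vec4 → Mat4}
    (hF : ∀ a b : Fin 4, ContDiff ℝ (⊤ : ℕ∞) fun p => F p a b) (i a b : Fin 4) (p : Vec4) :
    pd i (fun q => maxwellT (F q) a b) p =
      (∑ c, E c c * (pd i (fun q => F q a c) p * F p c b + F p a c * pd i (fun q => F q c b) p))
      - (1/4 : ℝ) * E a b * ∑ c, ∑ d, E c c * E d d *
        (pd i (fun q => F q c d) p * F p d c + F p c d * pd i (fun q => F q d c) p) := by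
  have hd : ∀ a b, DifferentiableAt ℝ (fun q => F q a b) p :=
    fun a b => (hF a b).differentiableAt_top p
  have hm : ∀ (k : ℝ) a b c d, pd i (fun q => k * (F q a b * F q c d)) p =
      k * (pd i (fun q => F q a b) p * F p c d + F p a b * pd i (fun q => F q c d) p) := by
    intro k a b c d
    rw [pd_mul i (differentiableAt_const _) ((hd _ _).fun_mul (hd _ _)), pd_const,
      pd_mul i (hd _ _) (hd _ _)]
    ring
  have hs : ∀ (k : ℝ) a b c d, DifferentiableAt ℝ (fun q => k * (F q a b * F q c d)) p :=
    fun k a b c d => (differentiableAt_const _).fun_mul ((hd _ _).fun_mul (hd _ _))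
  simp only [maxwellT_apply, sub_eq_add_neg, ← neg_mul]
  rw [pd_add i (DifferentiableAt.fun_sum fun c _ => hs _ _ _ _ _)
      ((differentiableAt_const _).fun_mul (DifferentiableAt.fun_sum fun c _ =>
        DifferentiableAt.fun_sum fun d _ => hs _ _ _ _ _)),
    pd_sum _ i (fun c _ => hs _ _ _ _ _),
    pd_mul i (differentiableAt_const _) (DifferentiableAt.fun_sum fun c _ =>
        DifferentiableAt.fun_sum fun d _ => hs _ _ _ _ _), pd_const, zero_mul, zero_add,
    pd_sum _ i (fun c _ => DifferentiableAt.fun_sum fun d _ => hs _ _ _ _ _)]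
  simp only [hm]
  congr 2
  refine Finset.sum_congr rfl fun c _ => ?_
  rw [pd_sum _ i (fun d _ => hs _ _ _ _ _)]
  simp only [hm]

lemma maxwellT_conserved {F : Vec4 → Mat4}
    (hF : ∀ a b : Fin 4, ContDiff ℝ (⊤ : ℕ∞) fun p => F p a b)
    (hanti : ∀ p, (F p)ᵀ = -(F p)) (hM : SolvesMaxwell F) (p : Vec4) (b : Fin 4) :
    ∑ a, E a a * pd a (fun q => maxwellT (F q) a b) p = 0 := by
  have h : ∀ q i j, F q i j = -F q j i := fun q i j => by
    simpa using congrFun (congrFun (hanti q) j) i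
  have hD : ∀ k i j, pd k (fun q => F q i j) p = -pd k (fun q => F q j i) p := by
    intro k i j
    have : (fun q => F q i j) = fun q => (-1 : ℝ) * F q j i := by
      funext q; rw [h q i j]; ring
    rw [this, pd_mul k (differentiableAt_const _) ((hF _ _).differentiableAt_top p), pd_const]
    ring
  simp only [pd_maxwellT hF]
  have hdiv := hM.1 p
  have hbi := hM.2 p
  have h := h p
  generalize hDg : (fun k i j => pd k (fun q => F q i j) p) = D at *
  have hDk : ∀ k i j, pd k (fun q => F q i j) p = D k i j := fun k i j => by rw [← hDg]
  simp only [hDk] at *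
  generalize F p = f at *
  clear hDg hDk hF hM hanti
  have key : ∑ a, E a a * ((∑ c, E c c * (D a a c * f c b + f a c * D a c b))
      - (1/4 : ℝ) * E a b * ∑ c, ∑ d, E c c * E d d * (D a c d * f d c + f c d * D a d c))
      = (∑ c, E c c * f c b * ∑ a, E a a * D a a c)
        + (1/2 : ℝ) * ∑ a, ∑ c, E a a * E c c * f a c * (D a c b + D c b a + D b a c) := by
    have h0 : ∀ i, f i i = 0 := fun i => by linarith [h i i]
    have hD0 : ∀ k i, D k i i = 0 := fun k i => by linarith [hD k i i]
    simp only [Fin.sum_univ_four, E_zero_zero, E_one_one, E_two_two, E_three_three]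
    rw [h 1 0, h 2 0, h 3 0, h 2 1, h 3 1, h 3 2]
    have e10 := fun k => hD k 1 0
    have e20 := fun k => hD k 2 0
    have e30 := fun k => hD k 3 0
    have e21 := fun k => hD k 2 1
    have e31 := fun k => hD k 3 1
    have e32 := fun k => hD k 3 2
    have hE : ∀ i j, i ≠ j → E i j = 0 := fun i j hij => by rw [E_apply, if_neg hij]
    fin_cases b <;>
      simp [e10, e20, e30, e21, e31, e32, h0, hD0, hE, E_zero_zero, E_one_one, E_two_two,
        E_three_three, h 1 0, h 2 0, h 3 0, h 2 1, h 3 1, h 3 2] <;>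
      ring
  rw [key]
  simp [hdiv, hbi]

/-! ### Test fields built from a trace part and a symmetrized gradient -/

/-- The matrix field `f E + ∇^{(a} v^{b)}`, where the index of `∇` is raised with `E`. -/
def traceAddSymGrad (f : Vec4 → ℝ) (v : Fin 4 → Vec4 → ℝ) (q : Vec4) : Mat4 :=
  Matrix.of fun a b => f q * E a b + (1/2 : ℝ) * (E a a * pd a (v b) q + E b b * pd b (v a) q)

lemma minner_traceAddSymGrad {T : Mat4} (hT : ∀ a b, T a b = T b a)
    (htr : ∑ a, ∑ b, T a b * E a b = 0) (f : Vec4 → ℝ) (v : Fin 4 → Vec4 → ℝ) (q : Vec4) :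
    minner T (traceAddSymGrad f v q) = ∑ b, ∑ a, E a a * (T a b * pd a (v b) q) := by
  have h1 : minner T (traceAddSymGrad f v q) = f q * (∑ a, ∑ b, T a b * E a b)
      + (1/2 : ℝ) * (∑ a, ∑ b, E a a * (T a b * pd a (v b) q))
      + (1/2 : ℝ) * (∑ a, ∑ b, E b b * (T b a * pd b (v a) q)) := by
    simp only [minner, traceAddSymGrad, Matrix.of_apply, Finset.mul_sum, ← Finset.sum_add_distrib]
    refine Finset.sum_congr rfl fun a _ => Finset.sum_congr rfl fun b _ => ?_
    rw [hT b a]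
    ring
  rw [h1, htr, Finset.sum_comm (f := fun a b => E a a * (T a b * pd a (v b) q))]
  ring

lemma HasCompactSupport.pd {f : Vec4 → ℝ} (hf : HasCompactSupport f) (a : Fin 4) :
    HasCompactSupport (pd a f) :=
  hf.fderiv_apply (𝕜 := ℝ) (Pi.single a 1)

lemma integral_mul_pd {g f : Vec4 → ℝ} (hg : ContDiff ℝ (⊤ : ℕ∞) g)
    (hf : ContDiff ℝ (⊤ : ℕ∞) f) (hfc : HasCompactSupport f) (a : Fin 4) :
    ∫ q, g q * pd a f q = -∫ q, pd a g q * f q :=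
  integral_mul_fderiv_eq_neg_fderiv_mul_of_integrable
    (((hg.pd a).continuous.mul hf.continuous).integrable_of_hasCompactSupport hfc.mul_left)
    ((hg.continuous.mul (hf.pd a).continuous).integrable_of_hasCompactSupport
      (hfc.pd a).mul_left)
    ((hg.continuous.mul hf.continuous).integrable_of_hasCompactSupport hfc.mul_left)
    (fun q _ => hg.differentiableAt_top q) (fun q _ => hf.differentiableAt_top q)

lemma integral_maxwellT_traceAddSymGrad {F : Vec4 → Mat4}
    (hF : ∀ a b : Fin 4, ContDiff ℝ (⊤ : ℕ∞) fun p => F p a b)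
    (hanti : ∀ p, (F p)ᵀ = -(F p)) (hM : SolvesMaxwell F)
    (f : Vec4 → ℝ) {v : Fin 4 → Vec4 → ℝ} (hv : ∀ b, ContDiff ℝ (⊤ : ℕ∞) (v b))
    (hvc : ∀ b, HasCompactSupport (v b)) :
    ∫ q, minner (maxwellT (F q)) (traceAddSymGrad f v q) = 0 := by
  have hT := contDiff_maxwellT hF
  simp only [minner_traceAddSymGrad (maxwellT_symm (hanti _)) (maxwellT_traceless _)]
  have hint : ∀ a b, Integrable fun q => E a a * (maxwellT (F q) a b * pd a (v b) q) :=
    fun a b => (((hT a b).continuous.mul ((hv b).pd a).continuous).integrable_of_hasCompactSupport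
      ((hvc b).pd a).mul_left).const_mul _
  have hint' : ∀ a b, Integrable fun q =>
      E a a * (pd a (fun q => maxwellT (F q) a b) q * v b q) :=
    fun a b => ((((hT a b).pd a).continuous.mul (hv b).continuous).integrable_of_hasCompactSupport
      (hvc b).mul_left).const_mul _
  rw [integral_finsetSum _ fun b _ => integrable_finsetSum _ fun a _ => hint a b]
  refine Finset.sum_eq_zero fun b _ => ?_
  calc ∫ q, ∑ a, E a a * (maxwellT (F q) a b * pd a (v b) q)
      = ∑ a, ∫ q, E a a * (maxwellT (F q) a b * pd a (v b) q) :=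
        integral_finsetSum _ fun a _ => hint a b
    _ = -∑ a, ∫ q, E a a * (pd a (fun q => maxwellT (F q) a b) q * v b q) := by
        rw [← Finset.sum_neg_distrib]
        refine Finset.sum_congr rfl fun a _ => ?_
        rw [integral_const_mul, integral_const_mul, integral_mul_pd (hT a b) (hv b) (hvc b) a]
        ring
    _ = -∫ q, ∑ a, E a a * (pd a (fun q => maxwellT (F q) a b) q * v b q) := by
        rw [integral_finsetSum _ fun a _ => hint' a b]
    _ = 0 := by
        have : ∀ q, ∑ a, E a a * (pd a (fun q => maxwellT (F q) a b) q * v b q) = 0 := fun q => by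
          simp only [← mul_assoc, ← Finset.sum_mul, maxwellT_conserved hF hanti hM, zero_mul]
        simp [this]

/-! ### The dual energy cone -/

lemma zero_mem_coneD : (0 : Mat4) ∈ coneD :=
  ⟨0, Fin.elim0, Fin.elim0, fun k => k.elim0, fun k => k.elim0, by simp⟩

lemma add_mem_coneD {x y : Mat4} (hx : x ∈ coneD) (hy : y ∈ coneD) : x + y ∈ coneD := by
  obtain ⟨n, ξ, ζ, h1, h2, rfl⟩ := hx
  obtain ⟨m, ξ', ζ', h1', h2', rfl⟩ := hy
  refine ⟨n + m, Fin.append ξ ξ', Fin.append ζ ζ', fun k => ?_, fun k => ?_, ?_⟩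
  · refine Fin.addCases (fun i => ?_) (fun i => ?_) k <;> simp [h1, h1']
  · refine Fin.addCases (fun i => ?_) (fun i => ?_) k <;> simp [h2, h2']
  · simp [Fin.sum_univ_add]

lemma FutureCausal.smul {x : Vec4} (hx : FutureCausal x) {c : ℝ} (hc : 0 ≤ c) :
    FutureCausal (c • x) := by
  refine ⟨?_, mul_nonneg hc hx.2⟩
  have : mink (c • x) (c • x) = c ^ 2 * mink x x := by simp [mink]; ring
  rw [this]
  exact mul_nonneg (sq_nonneg c) hx.1

lemma symProd_mem_coneD {ξ ζ : Vec4} (hξ : FutureCausal ξ) (hζ : FutureCausal ζ) :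
    (1/2 : ℝ) • (vecMulVec ξ ζ + vecMulVec ζ ξ) ∈ coneD :=
  ⟨1, fun _ => ξ, fun _ => ζ, fun _ => hξ, fun _ => hζ, by simp⟩

lemma smul_mem_coneD {x : Mat4} (hx : x ∈ coneD) {c : ℝ} (hc : 0 ≤ c) : c • x ∈ coneD := by
  obtain ⟨n, ξ, ζ, h1, h2, rfl⟩ := hx
  refine ⟨n, fun k => c • ξ k, ζ, fun k => (h1 k).smul hc, h2, ?_⟩
  rw [Finset.smul_sum]
  refine Finset.sum_congr rfl fun k _ => ?_
  ext i j
  simp [vecMulVec_apply]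
  ring

lemma sum_mem_coneD {ι : Type*} (s : Finset ι) {x : ι → Mat4} (hx : ∀ i ∈ s, x i ∈ coneD) :
    ∑ i ∈ s, x i ∈ coneD :=
  Finset.sum_induction x (· ∈ coneD) (fun _ _ => add_mem_coneD) zero_mem_coneD hx

lemma smul_vecMulVec_self_mem_coneD {u : Vec4} (hu : FutureCausal u) {k : ℝ} (hk : 0 ≤ k) :
    k • vecMulVec u u ∈ coneD := by
  have h := smul_mem_coneD (symProd_mem_coneD hu hu) hk
  rw [← two_smul ℝ, smul_smul, smul_smul] at h
  simpa using h

lemma FutureTimelike.exists_perturbation {u : Vec4} (hu : FutureTimelike u) :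
    ∃ r > 0, ∀ (c : ℝ) (a : Fin 4), |c| ≤ r → FutureCausal (u + c • Pi.single a (1 : ℝ)) := by
  have hopen : IsOpen {x : Vec4 | FutureTimelike x} := by
    refine (isOpen_lt continuous_const (?_ : Continuous fun x : Vec4 => mink x x)).inter (isOpen_lt continuous_const (continuous_apply 0))
    exact Continuous.sub (by fun_prop) (by fun_prop)
  obtain ⟨r, hr, hball⟩ := Metric.isOpen_iff.1 hopen u hu
  refine ⟨r / 2, half_pos hr, fun c a hc => ?_⟩
  have : FutureTimelike (u + c • Pi.single a (1 : ℝ)) := by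
    refine hball ?_
    rw [Metric.mem_ball, dist_eq_norm, add_sub_cancel_left, norm_smul, Pi.norm_single]
    simp only [Real.norm_eq_abs, norm_one, mul_one]
    linarith
  exact ⟨this.1.le, this.2.le⟩

lemma generic_vecMulVec_self {u : Vec4} (hu : FutureTimelike u) : Generic (vecMulVec u u) := by
  obtain ⟨r, hr, hpert⟩ := hu.exists_perturbation
  refine ⟨transpose_vecMulVec u u, mem_interior.2 ⟨{A | ∀ a b, 16 * |A.val a b - u a * u b| < r ^ 2},
    ?_, ?_, ?_⟩⟩
  · rintro ⟨A, hA⟩ hclose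
    change A ∈ coneD
    have hAs : ∀ a b, A a b = A b a := fun a b => congrFun (congrFun hA b) a
    have hterm : ∀ a b, vecMulVec u u + (16 * (A a b - u a * u b)) • ((1/2 : ℝ) •
        (vecMulVec (Pi.single a (1 : ℝ)) (Pi.single b (1 : ℝ))
          + vecMulVec (Pi.single b (1 : ℝ)) (Pi.single a (1 : ℝ)))) ∈ coneD := by
      intro a b
      set c := 16 * (A a b - u a * u b) / r with hc
      have hcr : |c| ≤ r := by
        rw [hc, abs_div, abs_of_pos hr, div_le_iff₀ hr, abs_mul, abs_of_pos (by norm_num : (0:ℝ) < 16)]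
        nlinarith [hclose a b]
      have hrc : 16 * (A a b - u a * u b) = r * c := by rw [hc]; field_simp
      have h1 := symProd_mem_coneD (hpert r a (abs_of_pos hr).le) (hpert c b hcr)
      have h2 := symProd_mem_coneD (hpert (-r) a (by rw [abs_neg]; exact (abs_of_pos hr).le))
        (hpert (-c) b (by rwa [abs_neg]))
      convert smul_mem_coneD (add_mem_coneD h1 h2) (by norm_num : (0 : ℝ) ≤ 1/2) using 1
      rw [hrc]
      ext i j
      simp only [Matrix.add_apply, Matrix.smul_apply, vecMulVec_apply, Pi.add_apply, Pi.smul_apply,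
        smul_eq_mul]
      ring
    convert sum_mem_coneD Finset.univ fun a (_ : a ∈ Finset.univ) =>
      sum_mem_coneD Finset.univ fun b (_ : b ∈ Finset.univ) =>
        smul_mem_coneD (hterm a b) (by norm_num : (0 : ℝ) ≤ 1/16) using 1
    ext i j
    simp only [Matrix.sum_apply, Matrix.add_apply, Matrix.smul_apply, vecMulVec_apply, smul_eq_mul,
      Pi.single_apply]
    have hij := hAs i j
    fin_cases i <;> fin_cases j <;> simp [Fin.sum_univ_four] at hij ⊢ <;> linarith
  · have : {A : {A : Mat4 // Aᵀ = A} | ∀ a b, 16 * |A.val a b - u a * u b| < r ^ 2}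
        = ⋂ a, ⋂ b, {A | 16 * |A.val a b - u a * u b| < r ^ 2} := by ext; simp
    rw [this]
    refine isOpen_iInter_of_finite fun a => isOpen_iInter_of_finite fun b =>
      isOpen_lt ?_ continuous_const
    have h : Continuous fun A : {A : Mat4 // Aᵀ = A} => A.val a b :=
      continuous_subtype_val.matrix_elem a b
    exact continuous_const.mul (h.sub continuous_const).abs
  · intro a b
    simp [vecMulVec_apply, hr]


/-! ### Profile functions along the geodesic -/

/-- A pair `φ, Ψ` of compactly supported profiles such that `φ + Ψ'` is nonnegative, and equal to
one on the support of `φ`. -/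
lemma exists_profiles : ∃ φ Ψ : ℝ → ℝ, ContDiff ℝ (⊤ : ℕ∞) φ ∧ ContDiff ℝ (⊤ : ℕ∞) Ψ ∧
    (∀ s, 1 ≤ |s| → φ s = 0) ∧ (∀ s, 2 ≤ |s| → Ψ s = 0) ∧
    (∀ s, 0 ≤ φ s + deriv Ψ s) ∧ (∀ s, |s| ≤ 1 → φ s + deriv Ψ s = 1) := by
  let b : ContDiffBump (0 : ℝ) := ⟨1, 2, one_pos, one_lt_two⟩
  have hb : ContDiff ℝ (⊤ : ℕ∞) (b : ℝ → ℝ) := b.contDiff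
  have hbz : ∀ s, 2 ≤ |s| → b s = 0 := fun s hs =>
    b.zero_of_le_dist (by simpa [Real.dist_eq] using hs)
  have hb1 : ∀ s, |s| ≤ 1 → b s = 1 := fun s hs =>
    b.one_of_mem_closedBall (by simpa [Real.dist_eq] using hs)
  set B : ℝ → ℝ := fun s => ∫ t in (0 : ℝ)..s, b t with hB
  have hBd : ∀ s, HasDerivAt B (b s) s := fun s =>
    intervalIntegral.integral_hasDerivAt_right (hb.continuous.intervalIntegrable _ _)
      (hb.continuous.stronglyMeasurableAtFilter _ _) hb.continuous.continuousAt
  have hBs : ContDiff ℝ (⊤ : ℕ∞) B := by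
    rw [contDiff_infty_iff_deriv]
    refine ⟨fun s => (hBd s).differentiableAt, ?_⟩
    have : deriv B = b := funext fun s => (hBd s).deriv
    rwa [this]
  have hΨd : ∀ s, HasDerivAt (fun s => B s - B (2 * s)) (b s - 2 * b (2 * s)) s := fun s => by
    have h2 : HasDerivAt (fun s : ℝ => 2 * s) 2 s := by
      simpa using (hasDerivAt_id s).const_mul (2 : ℝ)
    have := (hBd s).sub ((hBd (2 * s)).comp s h2)
    rw [mul_comm] at this
    exact this
  refine ⟨fun s => 2 * b (2 * s), fun s => B s - B (2 * s), ?_, ?_, fun s hs => ?_, fun s hs => ?_,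
    fun s => ?_, fun s hs => ?_⟩
  · exact contDiff_const.mul (hb.comp (contDiff_const.mul contDiff_id))
  · exact hBs.sub (hBs.comp (contDiff_const.mul contDiff_id))
  · have := hbz (2 * s) (by rw [abs_mul, abs_two]; linarith)
    simp [this]
  · have h0 : ∫ t in s..(2 * s), b t = 0 := by
      rw [intervalIntegral.integral_congr (g := fun _ => 0), intervalIntegral.integral_zero]
      intro t ht
      refine hbz t ?_
      rcases le_total 0 s with h | h
      · rw [Set.uIcc_of_le (by linarith)] at ht
        rw [abs_of_nonneg h] at hs
        exact hs.trans (ht.1.trans (le_abs_self t))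
      · rw [Set.uIcc_of_ge (by linarith)] at ht
        rw [abs_of_nonpos h] at hs
        exact hs.trans ((neg_le_neg ht.2).trans (neg_le_abs t))
    have h1 : B s + ∫ t in s..(2 * s), b t = B (2 * s) :=
      intervalIntegral.integral_add_adjacent_intervals
      (hb.continuous.intervalIntegrable _ _) (hb.continuous.intervalIntegrable _ _)
    change B s - B (2 * s) = 0
    linarith
  · rw [(hΨd s).deriv]
    have := b.nonneg (x := s)
    linarith
  · rw [(hΨd s).deriv, hb1 s hs]
    ring

/-- The derivative of a function vanishing on `r < |s|` vanishes there as well. -/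
lemma deriv_eq_zero_of_lt_abs {f : ℝ → ℝ} {r : ℝ} (hf : ∀ s, r < |s| → f s = 0) (s : ℝ)
    (hs : r < |s|) : deriv f s = 0 := by
  have h : f =ᶠ[𝓝 s] fun _ => 0 := by
    filter_upwards [(isOpen_lt continuous_const continuous_abs).mem_nhds hs] with t ht
    exact hf t ht
  rw [h.deriv_eq, deriv_const]

/-! ### The potential -/

lemma contDiff_mink_sub (p u : Vec4) : ContDiff ℝ (⊤ : ℕ∞) fun q => mink (q - p) u := by
  unfold mink
  simp only [Pi.sub_apply]
  fun_prop

lemma contDiff_mink_sub_self (p : Vec4) : ContDiff ℝ (⊤ : ℕ∞) fun q => mink (q - p) (q - p) := by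
  unfold mink
  simp only [Pi.sub_apply]
  fun_prop

lemma mink_eq_sum (x y : Vec4) : mink x y = ∑ i, E i i * (x i * y i) := by
  rw [Fin.sum_univ_four, E_zero_zero, E_one_one, E_two_two, E_three_three, mink]
  ring

lemma E_mul_self (a : Fin 4) : E a a * E a a = 1 := by
  fin_cases a <;> simp [E]

lemma pd_mink_sub (p u q : Vec4) (a : Fin 4) :
    E a a * pd a (fun y => mink (y - p) u) q = u a := by
  have hd : ∀ i, DifferentiableAt ℝ (fun y : Vec4 => y i - p i) q := fun i => by fun_prop
  have : (fun y => mink (y - p) u) = fun y => ∑ i, (y i - p i) * (E i i * u i) := by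
    funext y
    rw [mink_eq_sum]
    exact Finset.sum_congr rfl fun i _ => by simp only [Pi.sub_apply]; ring
  rw [this, pd_sum _ a (fun i _ => (hd i).fun_mul (differentiableAt_const _))]
  have : ∀ i, pd a (fun y : Vec4 => (y i - p i) * (E i i * u i)) q
      = if a = i then E i i * u i else 0 := fun i => by
    rw [pd_mul a (hd i) (differentiableAt_const _), pd_coord_sub, pd_const]
    split_ifs <;> ring
  simp only [this, Finset.sum_ite_eq, Finset.mem_univ, if_true]
  rw [← mul_assoc, E_mul_self, one_mul]

lemma pd_mink_sub_self (p q : Vec4) (a : Fin 4) :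
    E a a * pd a (fun y => mink (y - p) (y - p)) q = 2 * (q a - p a) := by
  have hd : ∀ i, DifferentiableAt ℝ (fun y : Vec4 => y i - p i) q := fun i => by fun_prop
  have : (fun y => mink (y - p) (y - p)) = fun y => ∑ i, E i i * ((y i - p i) * (y i - p i)) := by
    funext y
    rw [mink_eq_sum]
    rfl
  rw [this, pd_sum _ a (fun i _ => (differentiableAt_const _).fun_mul ((hd i).fun_mul (hd i)))]
  have : ∀ i, pd a (fun y : Vec4 => E i i * ((y i - p i) * (y i - p i))) q
      = if a = i then E i i * (2 * (q i - p i)) else 0 := fun i => by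
    rw [pd_mul a (differentiableAt_const _) ((hd i).fun_mul (hd i)), pd_const,
      pd_mul a (hd i) (hd i), pd_coord_sub]
    split_ifs <;> ring
  simp only [this, Finset.sum_ite_eq, Finset.mem_univ, if_true]
  rw [← mul_assoc, E_mul_self, one_mul]

/-- The vector potential `-φ(s) w + (φ'(s) η(w,w)/2 + ψ(s)) u`, where `w = q - p` and
`s = η(w,u)`. -/
def potential (φ ψ : ℝ → ℝ) (p u : Vec4) (b : Fin 4) (q : Vec4) : ℝ :=
  -1 * (φ (mink (q - p) u) * (q b - p b)) +
    ((1/2) * (deriv φ (mink (q - p) u) * mink (q - p) (q - p)) + ψ (mink (q - p) u)) * u b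

lemma contDiff_deriv_top {φ : ℝ → ℝ} (hφ : ContDiff ℝ (⊤ : ℕ∞) φ) :
    ContDiff ℝ (⊤ : ℕ∞) (deriv φ) :=
  (contDiff_infty_iff_deriv.1 hφ).2

lemma contDiff_potential {φ ψ : ℝ → ℝ} (hφ : ContDiff ℝ (⊤ : ℕ∞) φ)
    (hψ : ContDiff ℝ (⊤ : ℕ∞) ψ) (p u : Vec4) (b : Fin 4) :
    ContDiff ℝ (⊤ : ℕ∞) (potential φ ψ p u b) := by
  have hs := contDiff_mink_sub p u
  have hw : ContDiff ℝ (⊤ : ℕ∞) fun q : Vec4 => q b - p b := by fun_prop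
  exact (contDiff_const.mul ((hφ.comp hs).mul hw)).add
    (((contDiff_const.mul (((contDiff_deriv_top hφ).comp hs).mul (contDiff_mink_sub_self p))).add
      (hψ.comp hs)).mul contDiff_const)

lemma E_mul_pd_potential {φ ψ : ℝ → ℝ} (hφ : ContDiff ℝ (⊤ : ℕ∞) φ)
    (hψ : ContDiff ℝ (⊤ : ℕ∞) ψ) (p u q : Vec4) (a b : Fin 4) :
    E a a * pd a (potential φ ψ p u b) q =
      -(φ (mink (q - p) u) * E a b)
        + deriv φ (mink (q - p) u) * ((q a - p a) * u b - u a * (q b - p b))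
        + ((1/2) * (deriv (deriv φ) (mink (q - p) u) * mink (q - p) (q - p))
          + deriv ψ (mink (q - p) u)) * (u a * u b) := by
  have hφ' := contDiff_deriv_top hφ
  have hs := (contDiff_mink_sub p u).differentiableAt_top q
  have hN := (contDiff_mink_sub_self p).differentiableAt_top q
  have hw : DifferentiableAt ℝ (fun y : Vec4 => y b - p b) q := by fun_prop
  have h1 : DifferentiableAt ℝ (fun y => φ (mink (y - p) u)) q :=
    (hφ.comp (contDiff_mink_sub p u)).differentiableAt_top q
  have h2 : DifferentiableAt ℝ (fun y => deriv φ (mink (y - p) u)) q :=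
    (hφ'.comp (contDiff_mink_sub p u)).differentiableAt_top q
  have h3 : DifferentiableAt ℝ (fun y => ψ (mink (y - p) u)) q :=
    (hψ.comp (contDiff_mink_sub p u)).differentiableAt_top q
  have hc : ∀ c : ℝ, DifferentiableAt ℝ (fun _ : Vec4 => c) q := differentiableAt_const
  have hα := (hc (1/2)).fun_mul (h2.fun_mul hN)
  unfold potential
  rw [pd_add a ((hc _).fun_mul (h1.fun_mul hw)) ((hα.fun_add h3).fun_mul (hc _)),
    pd_mul a (hc _) (h1.fun_mul hw), pd_mul a h1 hw, pd_mul a (hα.fun_add h3) (hc _),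
    pd_add a hα h3, pd_mul a (hc _) (h2.fun_mul hN), pd_mul a h2 hN,
    pd_comp a (hφ.differentiableAt_top _) hs, pd_comp a (hφ'.differentiableAt_top _) hs,
    pd_comp a (hψ.differentiableAt_top _) hs, pd_const, pd_const, pd_const, pd_coord_sub,
    E_apply a b]
  have e1 := pd_mink_sub p u q a
  have e2 := pd_mink_sub_self p q a
  generalize pd a (fun y => mink (y - p) u) q = d1 at *
  generalize pd a (fun y => mink (y - p) (y - p)) q = d2 at *
  rw [← e1, show q a - p a = (1/2) * (E a a * d2) by linarith]
  split_ifs <;> ring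

lemma traceAddSymGrad_potential {φ ψ : ℝ → ℝ} (hφ : ContDiff ℝ (⊤ : ℕ∞) φ)
    (hψ : ContDiff ℝ (⊤ : ℕ∞) ψ) (p u q : Vec4) :
    traceAddSymGrad (fun q => φ (mink (q - p) u)) (potential φ ψ p u) q =
      ((1/2) * (deriv (deriv φ) (mink (q - p) u) * mink (q - p) (q - p))
        + deriv ψ (mink (q - p) u)) • vecMulVec u u := by
  ext a b
  simp only [traceAddSymGrad, Matrix.of_apply, E_mul_pd_potential hφ hψ, Matrix.smul_apply,
    vecMulVec_apply, smul_eq_mul]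
  have hE : E b a = E a b := by rw [E_apply a b, E_apply b a]; by_cases h : a = b <;> simp [h, eq_comm]
  rw [hE]
  ring

lemma traceAddSymGrad_congr {f g : Vec4 → ℝ} {v w : Fin 4 → Vec4 → ℝ} {q : Vec4} (hf : f q = g q)
    (hv : ∀ b, v b =ᶠ[𝓝 q] w b) : traceAddSymGrad f v q = traceAddSymGrad g w q := by
  ext a b
  simp only [traceAddSymGrad, Matrix.of_apply, hf, pd_congr _ (hv _)]

lemma traceAddSymGrad_eq_zero {f : Vec4 → ℝ} {v : Fin 4 → Vec4 → ℝ} {q : Vec4} (hf : f q = 0)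
    (hv : ∀ b, v b =ᶠ[𝓝 q] fun _ => 0) : traceAddSymGrad f v q = 0 := by
  rw [traceAddSymGrad_congr (g := fun _ => 0) (w := fun _ _ => 0) hf hv]
  ext a b
  simp [traceAddSymGrad, pd_const]

lemma smoothMatField_traceAddSymGrad {f : Vec4 → ℝ} {v : Fin 4 → Vec4 → ℝ}
    (hf : ContDiff ℝ (⊤ : ℕ∞) f) (hv : ∀ b, ContDiff ℝ (⊤ : ℕ∞) (v b)) :
    SmoothMatField (traceAddSymGrad f v) := fun a b =>
  (hf.mul contDiff_const).add (contDiff_const.mul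
    ((contDiff_const.mul ((hv b).pd a)).add (contDiff_const.mul ((hv a).pd b))))

lemma symValued_traceAddSymGrad (f : Vec4 → ℝ) (v : Fin 4 → Vec4 → ℝ) :
    SymValued (traceAddSymGrad f v) := fun q => by
  ext a b
  have hE : E b a = E a b := by
    rw [E_apply a b, E_apply b a]; by_cases h : a = b <;> simp [h, eq_comm]
  simp only [Matrix.transpose_apply, traceAddSymGrad, Matrix.of_apply, hE]
  ring

/-- A time profile `ψ` for which the potential has symmetrized gradient proportional to `u u`, with
an explicitly controlled coefficient. -/
lemma exists_potential_profiles : ∃ φ ψ : ℝ → ℝ, ∃ M : ℝ,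
    ContDiff ℝ (⊤ : ℕ∞) φ ∧ ContDiff ℝ (⊤ : ℕ∞) ψ ∧
    (∀ s, 2 < |s| → φ s = 0 ∧ deriv φ s = 0 ∧ ψ s = 0) ∧
    (∀ s N, M * |N - s ^ 2| < 2 → 0 ≤ (1/2) * (deriv (deriv φ) s * N) + deriv ψ s) ∧
    (1/2) * (deriv (deriv φ) 0 * 0) + deriv ψ 0 = 1 := by
  obtain ⟨φ, Ψ, hφ, hΨ, hφ0, hΨ0, hnn, hone⟩ := exists_profiles
  have hφ' := contDiff_deriv_top hφ
  have hφ'' := contDiff_deriv_top hφ'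
  have z0 : ∀ s, 1 < |s| → φ s = 0 := fun s hs => hφ0 s hs.le
  have z1 := deriv_eq_zero_of_lt_abs z0
  have z2 := deriv_eq_zero_of_lt_abs z1
  obtain ⟨M, hM⟩ := (isCompact_Icc (a := (-1 : ℝ)) (b := 1)).exists_bound_of_continuousOn
    hφ''.continuous.continuousOn
  have hψd : ∀ s, deriv (fun s => Ψ s - (1/2) * (s ^ 2 * deriv φ s) + s * φ s) s
      = φ s + deriv Ψ s - (1/2) * (s ^ 2 * deriv (deriv φ) s) := fun s => by
    have d1 := (hΨ.differentiableAt_top s).hasDerivAt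
    have d2 := ((hasDerivAt_pow 2 s).mul (hφ'.differentiableAt_top s).hasDerivAt).const_mul (1/2 : ℝ)
    have d3 := (hasDerivAt_id s).mul (hφ.differentiableAt_top s).hasDerivAt
    have h := ((d1.sub d2).add d3).deriv
    refine Eq.trans h ?_
    simp
    ring
  refine ⟨φ, fun s => Ψ s - (1/2) * (s ^ 2 * deriv φ s) + s * φ s, M, hφ, ?_, ?_, ?_, ?_⟩
  · exact (hΨ.sub (contDiff_const.mul ((contDiff_id.pow 2).mul hφ'))).add (contDiff_id.mul hφ)
  · intro s hs
    have hs1 : 1 < |s| := one_lt_two.trans hs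
    simp [z0 s hs1, z1 s hs1, hΨ0 s hs.le]
  · intro s N hN
    rw [hψd]
    rcases le_or_gt |s| 1 with h | h
    · rw [hone s h]
      have h1 : |deriv (deriv φ) s * (N - s ^ 2)| ≤ M * |N - s ^ 2| := by
        rw [abs_mul]
        exact mul_le_mul_of_nonneg_right (hM s (abs_le.1 h)) (abs_nonneg _)
      have := (abs_le.1 (h1.trans hN.le)).1
      linarith
    · rw [z2 s h]
      have := hnn s
      linarith
  · rw [hψd, hone 0 (by simp)]
    ring

/-- Source-free Maxwell fields track no timelike geodesics. -/
theorem maxwell_tracks_no_timelike_geodesics (p : Vec4) (u : Vec4) (hu : UnitTimelike u) :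
    ¬ Tracks maxwellC (fun t => p + t • u) := by
  obtain ⟨φ, ψ, M, hφ, hψ, hzero, hnonneg, hone⟩ := exists_potential_profiles
  set R : ℝ := 2 * ‖u‖ + 1 with hR
  have hRpos : 0 < R := by positivity
  let χ : ContDiffBump p := ⟨R, R + 1, hRpos, lt_add_one R⟩
  have hχ : ContDiff ℝ (⊤ : ℕ∞) (χ : Vec4 → ℝ) := χ.contDiff
  set f : Vec4 → ℝ := fun q => χ q * φ (mink (q - p) u) with hf
  set v : Fin 4 → Vec4 → ℝ := fun b q => χ q * potential φ ψ p u b q with hv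
  have hfs : ContDiff ℝ (⊤ : ℕ∞) f := hχ.mul (hφ.comp (contDiff_mink_sub p u))
  have hvs : ∀ b, ContDiff ℝ (⊤ : ℕ∞) (v b) := fun b => hχ.mul (contDiff_potential hφ hψ p u b)
  have hvc : ∀ b, HasCompactSupport (v b) := fun b => χ.hasCompactSupport.mul_right
  have hNc : Continuous fun q => mink (q - p) (q - p) := (contDiff_mink_sub_self p).continuous
  have hsc : Continuous fun q => mink (q - p) u := (contDiff_mink_sub p u).continuous
  have hs_line : ∀ t : ℝ, mink (p + t • u - p) u = t := fun t => by
    have h := hu.2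
    simp only [mink, add_sub_cancel_left, Pi.smul_apply, smul_eq_mul] at h ⊢
    linear_combination t * h
  have hN_line : ∀ t : ℝ, mink (p + t • u - p) (p + t • u - p) = t ^ 2 := fun t => by
    have h := hu.2
    simp only [mink, add_sub_cancel_left, Pi.smul_apply, smul_eq_mul] at h ⊢
    linear_combination t ^ 2 * h
  have hinner : ∀ q ∈ Metric.ball p R, traceAddSymGrad f v q =
      ((1/2) * (deriv (deriv φ) (mink (q - p) u) * mink (q - p) (q - p))
        + deriv ψ (mink (q - p) u)) • vecMulVec u u := fun q hq => by
    rw [← traceAddSymGrad_potential hφ hψ]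
    refine traceAddSymGrad_congr ?_ fun b => ?_
    · simp [hf, χ.one_of_mem_closedBall (Metric.ball_subset_closedBall hq)]
    · filter_upwards [Metric.isOpen_ball.mem_nhds hq] with y hy
      simp [hv, χ.one_of_mem_closedBall (Metric.ball_subset_closedBall hy)]
  have houter : ∀ q, 2 < |mink (q - p) u| → traceAddSymGrad f v q = 0 := fun q hq => by
    refine traceAddSymGrad_eq_zero ?_ fun b => ?_
    · simp [hf, (hzero _ hq).1]
    · filter_upwards [(isOpen_lt continuous_const hsc.abs).mem_nhds hq] with y hy
      obtain ⟨h0, h1, h2⟩ := hzero _ hy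
      simp [hv, potential, h0, h1, h2]
  intro htracks
  suffices h : ∃ T ∈ maxwellC, 0 < ∫ q, minner (T q) (traceAddSymGrad f v q) by
    obtain ⟨T, ⟨F, hF, hanti, hM, rfl⟩, hpos⟩ := h
    rw [integral_maxwellT_traceAddSymGrad hF hanti hM f hvs hvc] at hpos
    exact lt_irrefl _ hpos
  refine htracks (traceAddSymGrad f v) (smoothMatField_traceAddSymGrad hfs hvs) ?_
    (symValued_traceAddSymGrad f v) ?_ ?_
  · refine HasCompactSupport.intro (isCompact_closedBall p (R + 1)) fun q hq => ?_
    have hχ0 : ∀ y, y ∉ Metric.closedBall p (R + 1) → χ y = 0 := fun y hy =>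
      χ.zero_of_le_dist (le_of_lt (by simpa using hy))
    refine traceAddSymGrad_eq_zero ?_ fun b => ?_
    · simp [hf, hχ0 q hq]
    · filter_upwards [Metric.isClosed_closedBall.isOpen_compl.mem_nhds hq] with y hy
      simp [hv, hχ0 y hy]
  · refine ⟨(Metric.ball p R ∩ {q | M * |mink (q - p) (q - p) - mink (q - p) u ^ 2| < 2}) ∪
      {q | 2 < |mink (q - p) u|}, ?_, ?_, ?_⟩
    · exact (Metric.isOpen_ball.inter (isOpen_lt
        (continuous_const.mul (hNc.sub (hsc.pow 2)).abs) continuous_const)).union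
        (isOpen_lt continuous_const hsc.abs)
    · rintro _ ⟨t, rfl⟩
      rcases lt_or_ge 2 |t| with h | h
      · exact Or.inr (by simpa only [Set.mem_ofPred_eq, hs_line] using h)
      · refine Or.inl ⟨?_, ?_⟩
        · rw [Metric.mem_ball, dist_eq_norm, add_sub_cancel_left, norm_smul, Real.norm_eq_abs]
          have := mul_le_mul_of_nonneg_right h (norm_nonneg u)
          linarith
        · simp only [Set.mem_ofPred_eq, hs_line, hN_line, sub_self, abs_zero, mul_zero]
          norm_num
    · rintro q (⟨hq, hq'⟩ | hq)
      · rw [hinner q hq]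
        exact smul_vecMulVec_self_mem_coneD ⟨hu.1.1.le, hu.1.2.le⟩ (hnonneg _ _ hq')
      · rw [houter q hq]
        exact zero_mem_coneD
  · refine ⟨0, ?_⟩
    have hmem : p + (0 : ℝ) • u ∈ Metric.ball p R := by simpa using hRpos
    have h := hinner _ hmem
    rw [hs_line, hN_line, show (0 : ℝ) ^ 2 = 0 by norm_num, hone, one_smul] at h
    rw [h]
    exact generic_vecMulVec_self hu.1
end
end

section
/- Klein–Gordon fields of all positive masses track all timelike and null geodesics (flat-space version): let 𝒞 be the collection of stress-energy tensors T[φ,m] of all pairs (φ, m) with m > 0 and φ : ℝ⁴ → ℝ a smooth solution of the mass-m Klein–Gordon equation. Then for every p ∈ ℝ⁴ and every u ∈ ℝ⁴ that is either unit timelike or future null, the collection 𝒞 tracks the geodesic γ : t ↦ p + t • u. -/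
open Matrix MeasureTheory Filter Topology

noncomputable section

/-- The collection of stress-energy tensors of smooth solutions of the mass-m
Klein–Gordon equation, over all masses m > 0. -/
def kgC : Set (Vec4 → Mat4) :=
  { T | ∃ (φ : Vec4 → ℝ) (m : ℝ), 0 < m ∧ ContDiff ℝ (⊤ : ℕ∞) φ ∧ SolvesKG φ m ∧
      T = kgT φ m }

section PlaneWaves

variable {ι : Type*} [Fintype ι]

/-- A finite superposition of plane waves with amplitudes `c`, wave covectors `κ` and a common
phase shift `θ`, centred at `p₀`. -/
def wave (c : ι → ℝ) (κ : ι → Vec4) (p₀ : Vec4) (θ : ℝ) (p : Vec4) : ℝ :=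
  ∑ f, c f * Real.cos (κ f ⬝ᵥ (p - p₀) + θ)

lemma contDiff_wave (c : ι → ℝ) (κ : ι → Vec4) (p₀ : Vec4) (θ : ℝ) :
    ContDiff ℝ (⊤ : ℕ∞) (wave c κ p₀ θ) := by
  unfold wave dotProduct
  simp only [Pi.sub_apply]
  fun_prop

lemma hasFDerivAt_dotProduct_sub (k p₀ p : Vec4) :
    HasFDerivAt (fun p : Vec4 => k ⬝ᵥ (p - p₀))
      (∑ a, k a • ContinuousLinearMap.proj (R := ℝ) (φ := fun _ : Fin 4 => ℝ) a) p := by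
  have h : (fun p : Vec4 => k ⬝ᵥ (p - p₀)) = fun p =>
      (∑ a, k a • ContinuousLinearMap.proj (R := ℝ) (φ := fun _ : Fin 4 => ℝ) a) p
        - k ⬝ᵥ p₀ := by
    ext p
    simp [dotProduct, mul_sub]
  rw [h]
  exact (ContinuousLinearMap.hasFDerivAt _).sub_const _

/-- Differentiating a superposition of plane waves shifts the phase by `π / 2`. -/
lemma pd_wave (a : Fin 4) (c : ι → ℝ) (κ : ι → Vec4) (p₀ : Vec4) (θ : ℝ) :
    pd a (wave c κ p₀ θ) = wave (fun f => c f * κ f a) κ p₀ (θ + Real.pi / 2) := by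
  ext p
  have h : HasFDerivAt (wave c κ p₀ θ) _ p := HasFDerivAt.fun_sum fun f _ =>
    ((((hasFDerivAt_dotProduct_sub (κ f) p₀ p).add_const θ).cos).const_mul (c f))
  rw [pd, h.fderiv]
  simp only [wave, ← add_assoc, Real.cos_add_pi_div_two]
  simp [Pi.single_apply, mul_assoc, mul_comm (Real.sin _)]

lemma solvesKG_wave {κ : ι → Vec4} {m : ℝ} (hκ : ∀ f, mink (κ f) (κ f) = m ^ 2)
    (c : ι → ℝ) (p₀ : Vec4) (θ : ℝ) : SolvesKG (wave c κ p₀ θ) m := by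
  intro p
  simp only [pd_wave, wave, ← add_assoc, Real.cos_add_pi_div_two, Real.sin_add_pi_div_two,
    ← Finset.sum_sub_distrib, Finset.mul_sum, ← Finset.sum_add_distrib]
  refine Finset.sum_eq_zero fun f _ => ?_
  rw [← hκ f, mink]
  ring

lemma wave_mul_add_wave_mul (c d : ι → ℝ) (κ : ι → Vec4) (p₀ : Vec4) (θ : ℝ) (p : Vec4) :
    wave c κ p₀ (θ + Real.pi / 2) p * wave d κ p₀ (θ + Real.pi / 2) p
        + wave c κ p₀ θ p * wave d κ p₀ θ p
      = ∑ f, ∑ g, c f * d g * Real.cos ((κ f - κ g) ⬝ᵥ (p - p₀)) := by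
  simp only [wave, ← add_assoc, Real.cos_add_pi_div_two, Finset.sum_mul_sum,
    ← Finset.sum_add_distrib]
  refine Finset.sum_congr rfl fun f _ => Finset.sum_congr rfl fun g _ => ?_
  have : (κ f - κ g) ⬝ᵥ (p - p₀)
      = (κ f ⬝ᵥ (p - p₀) + θ) - (κ g ⬝ᵥ (p - p₀) + θ) := by
    rw [sub_dotProduct]; ring
  rw [this, Real.cos_sub]
  ring

/-- The pairing with `X` of the interference term of two plane waves with covectors `v`, `w`;
`τ` is the squared mass. -/
def interference (v w : Vec4) (τ : ℝ) (X : Mat4) : ℝ :=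
  ∑ a, ∑ b, (v a * w b - (1/2 : ℝ) * E a b * ((∑ c, E c c * (v c * w c)) - τ)) * X a b

lemma interference_smul (r : ℝ) (v w : Vec4) (τ : ℝ) (X : Mat4) :
    interference (r • v) (r • w) (r ^ 2 * τ) X = r ^ 2 * interference v w τ X := by
  simp only [interference, Finset.mul_sum]
  refine Finset.sum_congr rfl fun a _ => Finset.sum_congr rfl fun b _ => ?_
  have : ∑ c, E c c * ((r • v) c * (r • w) c) = r ^ 2 * ∑ c, E c c * (v c * w c) := by
    rw [Finset.mul_sum]
    exact Finset.sum_congr rfl fun c _ => by simp only [Pi.smul_apply, smul_eq_mul]; ring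
  rw [this]
  simp only [Pi.smul_apply, smul_eq_mul]
  ring

/-- The stress-energy tensors of two superpositions in phase quadrature add up to an expression
depending only on the differences of the wave covectors. -/
lemma minner_kgT_wave_add (κ : ι → Vec4) (m : ℝ) (p₀ : Vec4) (θ : ℝ) (p : Vec4) (X : Mat4) :
    minner (kgT (wave 1 κ p₀ (θ + Real.pi / 2)) m p) X + minner (kgT (wave 1 κ p₀ θ) m p) X
      = ∑ f, ∑ g, interference (κ f) (κ g) (m ^ 2) X
          * Real.cos ((κ f - κ g) ⬝ᵥ (p - p₀)) := by
  have entry : ∀ a b, kgT (wave 1 κ p₀ (θ + Real.pi / 2)) m p a b + kgT (wave 1 κ p₀ θ) m p a b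
      = ∑ f, ∑ g, (κ f a * κ g b
          - (1/2 : ℝ) * E a b * ((∑ c, E c c * (κ f c * κ g c)) - m ^ 2))
          * Real.cos ((κ f - κ g) ⬝ᵥ (p - p₀)) := by
    intro a b
    have h1 := wave_mul_add_wave_mul (1 : ι → ℝ) 1 κ p₀ θ p
    have h2 : ∀ a b, pd a (wave 1 κ p₀ (θ + Real.pi / 2)) p * pd b (wave 1 κ p₀ (θ + Real.pi / 2)) p
        + pd a (wave 1 κ p₀ θ) p * pd b (wave 1 κ p₀ θ) p
        = ∑ f, ∑ g, κ f a * κ g b * Real.cos ((κ f - κ g) ⬝ᵥ (p - p₀)) := by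
      intro a b
      simp only [pd_wave, wave_mul_add_wave_mul, Pi.one_apply, one_mul]
    have h3 : ∑ f, ∑ g, (κ f a * κ g b
          - (1/2 : ℝ) * E a b * ((∑ c, E c c * (κ f c * κ g c)) - m ^ 2))
          * Real.cos ((κ f - κ g) ⬝ᵥ (p - p₀))
        = ∑ f, ∑ g, κ f a * κ g b * Real.cos ((κ f - κ g) ⬝ᵥ (p - p₀))
          - (1/2 : ℝ) * E a b * (∑ c, E c c *
              (∑ f, ∑ g, κ f c * κ g c * Real.cos ((κ f - κ g) ⬝ᵥ (p - p₀)))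
            - m ^ 2 * ∑ f, ∑ g, 1 * 1 * Real.cos ((κ f - κ g) ⬝ᵥ (p - p₀))) := by
      simp only [Fin.sum_univ_four, Finset.mul_sum, ← Finset.sum_add_distrib,
        ← Finset.sum_sub_distrib]
      refine Finset.sum_congr rfl fun f _ => Finset.sum_congr rfl fun g _ => ?_
      ring
    simp only [Pi.one_apply] at h1
    rw [h3, ← h1]
    simp only [← h2]
    simp only [kgT, Matrix.of_apply, Fin.sum_univ_four]
    ring
  simp only [minner, ← Finset.sum_add_distrib, ← add_mul, entry, interference, Finset.sum_mul]
  calc _ = ∑ a, ∑ f, ∑ b, ∑ g, (κ f a * κ g b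
          - (1/2 : ℝ) * E a b * ((∑ c, E c c * (κ f c * κ g c)) - m ^ 2))
          * Real.cos ((κ f - κ g) ⬝ᵥ (p - p₀)) * X a b :=
        Finset.sum_congr rfl fun a _ => Finset.sum_comm
    _ = _ := by
      rw [Finset.sum_comm]
      refine Finset.sum_congr rfl fun f _ => ?_
      calc _ = ∑ a, ∑ g, ∑ b, (κ f a * κ g b
              - (1/2 : ℝ) * E a b * ((∑ c, E c c * (κ f c * κ g c)) - m ^ 2))
              * Real.cos ((κ f - κ g) ⬝ᵥ (p - p₀)) * X a b :=
            Finset.sum_congr rfl fun a _ => Finset.sum_comm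
        _ = _ := by
          rw [Finset.sum_comm]
          exact Finset.sum_congr rfl fun g _ => Finset.sum_congr rfl fun a _ =>
            Finset.sum_congr rfl fun b _ => by ring

lemma sum_cos_sub_eq_normSq (θ : ι → ℝ) :
    ∑ f, ∑ g, Real.cos (θ f - θ g)
      = Complex.normSq (∑ f, Complex.exp (θ f * Complex.I)) := by
  simp only [Complex.normSq_apply, Complex.re_sum, Complex.im_sum, Complex.exp_ofReal_mul_I_re,
    Complex.exp_ofReal_mul_I_im, Finset.sum_mul_sum, ← Finset.sum_add_distrib, Real.cos_sub]

/-- Powers of the interference pattern of `θ` are again interference patterns. -/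
lemma sum_cos_sub_pow (θ : ι → ℝ) (N : ℕ) :
    ∑ f : Fin N → ι, ∑ g : Fin N → ι, Real.cos (∑ k, θ (f k) - ∑ k, θ (g k))
      = (∑ i, ∑ j, Real.cos (θ i - θ j)) ^ N := by
  rw [sum_cos_sub_eq_normSq θ, sum_cos_sub_eq_normSq fun f : Fin N → ι => ∑ k, θ (f k),
    ← map_pow, Fintype.sum_pow]
  congr 1
  refine Finset.sum_congr rfl fun f _ => ?_
  rw [← Complex.exp_sum]
  push_cast
  rw [Finset.sum_mul]

end PlaneWaves

section Integrals

lemma continuous_minner_kgT {φ : Vec4 → ℝ} (hφ : ContDiff ℝ (⊤ : ℕ∞) φ) (m : ℝ)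
    {x : Vec4 → Mat4} (hx : ∀ a b, Continuous fun p => x p a b) :
    Continuous fun p => minner (kgT φ m p) (x p) := by
  have hpd : ∀ a, Continuous (pd a φ) := fun a =>
    (hφ.continuous_fderiv (by simp)).clm_apply continuous_const
  have := hφ.continuous
  unfold minner kgT
  simp only [Matrix.of_apply]
  fun_prop

lemma integrable_minner_kgT {φ : Vec4 → ℝ} (hφ : ContDiff ℝ (⊤ : ℕ∞) φ) (m : ℝ)
    {x : Vec4 → Mat4} (hx : ∀ a b, Continuous fun p => x p a b) (hc : HasCompactSupport x) :
    Integrable fun p => minner (kgT φ m p) (x p) :=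
  (continuous_minner_kgT hφ m hx).integrable_of_hasCompactSupport <|
    hc.mono fun p hp hxp => hp (by simp [minner, hxp])

/-- If `G` is strictly larger at `p₁` than wherever `h` may be negative, then high powers of `G`
concentrate the integral of `h` on the region where `h` is nonnegative. -/
lemma exists_integral_pow_mul_pos {G h : Vec4 → ℝ} (hG : Continuous G) (hh : Continuous h)
    (hc : HasCompactSupport h) (hG0 : ∀ p, 0 ≤ G p) {O : Set Vec4} (hO : IsOpen O)
    (hO0 : ∀ p ∈ O, 0 ≤ h p) {p₁ : Vec4} (hp₁ : 0 < h p₁) (hp₁O : p₁ ∈ O)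
    (hlt : ∀ p ∈ tsupport h, p ∉ O → G p < G p₁) (hG1 : 0 < G p₁) :
    ∃ N : ℕ, 0 < ∫ p, G p ^ N * h p := by
  obtain ⟨ρ, hρ0, hρ1, hρ⟩ : ∃ ρ, 0 ≤ ρ ∧ ρ < G p₁ ∧ ∀ p ∈ tsupport h, p ∉ O → G p ≤ ρ := by
    have hK : IsCompact (tsupport h \ O) := hc.isCompact.diff hO
    rcases (tsupport h \ O).eq_empty_or_nonempty with he | hne
    · exact ⟨0, le_rfl, hG1, fun p hp hpO => ((he ▸ ⟨hp, hpO⟩ : p ∈ (∅ : Set Vec4))).elim⟩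
    · obtain ⟨q, hq, hmax⟩ := hK.exists_isMaxOn hne hG.continuousOn
      exact ⟨G q, hG0 q, hlt q hq.1 hq.2, fun p hp hpO => hmax ⟨hp, hpO⟩⟩
  obtain ⟨σ, hσ1, hσ2⟩ := exists_between hρ1
  have hσ0 : 0 < σ := hρ0.trans_lt hσ1
  set B : Set Vec4 := {p | σ < G p} ∩ {p | h p₁ / 2 < h p} ∩ O with hB
  have hBo : IsOpen B :=
    ((isOpen_lt continuous_const hG).inter (isOpen_lt continuous_const hh)).inter hO
  have hBp : 0 < volume B :=
    hBo.measure_pos _ ⟨p₁, ⟨hσ2, show h p₁ / 2 < h p₁ by linarith⟩, hp₁O⟩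
  have hBfin : volume B < ⊤ := by
    refine (measure_mono fun p hp => subset_tsupport h ?_).trans_lt hc.isCompact.measure_lt_top
    have : h p₁ / 2 < h p := hp.1.2
    exact (by linarith : 0 < h p).ne'
  have hV : 0 < volume.real B := ENNReal.toReal_pos hBp.ne' hBfin.ne
  have hint : Integrable h := hh.integrable_of_hasCompactSupport hc
  have hlim : Tendsto (fun N : ℕ => (ρ / σ) ^ N * ∫ p, |h p|) atTop (𝓝 (0 * ∫ p, |h p|)) :=
    (tendsto_pow_atTop_nhds_zero_of_lt_one (by positivity)
      ((div_lt_one hσ0).2 hσ1)).mul_const _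
  rw [zero_mul] at hlim
  obtain ⟨N, hN⟩ := (hlim.eventually_lt_const
    (show 0 < h p₁ / 2 * volume.real B by positivity)).exists
  refine ⟨N, ?_⟩
  have hlow : ∀ p, B.indicator (fun _ => σ ^ N * (h p₁ / 2)) p - ρ ^ N * |h p|
      ≤ G p ^ N * h p := by
    intro p
    by_cases hpB : p ∈ B
    · rw [Set.indicator_of_mem hpB]
      have h1 : σ ^ N ≤ G p ^ N := pow_le_pow_left₀ hσ0.le (le_of_lt hpB.1.1) N
      have h2 : h p₁ / 2 ≤ h p := le_of_lt hpB.1.2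
      have h3 : 0 ≤ ρ ^ N * |h p| := by positivity
      have := mul_le_mul h1 h2 (by positivity) (pow_nonneg (hG0 p) N)
      linarith
    · rw [Set.indicator_of_notMem hpB, zero_sub]
      by_cases hpO : p ∈ O
      · have h3 : 0 ≤ ρ ^ N * |h p| := by positivity
        have := mul_nonneg (pow_nonneg (hG0 p) N) (hO0 p hpO)
        linarith
      · by_cases hp0 : h p = 0
        · simp [hp0]
        · have h1 : G p ^ N ≤ ρ ^ N :=
            pow_le_pow_left₀ (hG0 p) (hρ p (subset_tsupport h hp0) hpO) N
          have h2 := mul_le_mul_of_nonneg_right h1 (abs_nonneg (h p))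
          have h3 := mul_le_mul_of_nonneg_left (neg_abs_le (h p)) (pow_nonneg (hG0 p) N)
          linarith
  have hi1 : Integrable (B.indicator fun _ => σ ^ N * (h p₁ / 2)) :=
    (integrable_indicator_iff hBo.measurableSet).2 (integrableOn_const hBfin.ne)
  have hi2 : Integrable fun p => ρ ^ N * |h p| := hint.abs.const_mul _
  have hi3 : Integrable fun p => G p ^ N * h p :=
    ((hG.pow N).mul hh).integrable_of_hasCompactSupport hc.mul_left
  have hmono := integral_mono (hi1.sub hi2) hi3 hlow
  have hval : ∫ p, (B.indicator (fun _ => σ ^ N * (h p₁ / 2)) - fun p => ρ ^ N * |h p|) p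
      = σ ^ N * (h p₁ / 2 * volume.real B - (ρ / σ) ^ N * ∫ p, |h p|) := by
    rw [integral_sub' hi1 hi2, integral_indicator_const _ hBo.measurableSet,
      integral_const_mul, div_pow]
    simp only [smul_eq_mul]
    field_simp
  rw [hval] at hmono
  exact (mul_pos (pow_pos hσ0 N) (sub_pos.2 hN)).trans_le hmono

end Integrals

section Cone

/-- The covector `η(u, ·)`. -/
def covec (u : Vec4) : Vec4 := ![u 0, -u 1, -u 2, -u 3]

lemma mink_nonneg_of_futureCausal {u ξ : Vec4} (hu : FutureCausal u) (hξ : FutureCausal ξ) :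
    0 ≤ mink u ξ := by
  obtain ⟨h1, h2⟩ := hu
  obtain ⟨h3, h4⟩ := hξ
  unfold mink at *
  have hcs : (u 1 * ξ 1 + u 2 * ξ 2 + u 3 * ξ 3) ^ 2
      ≤ (u 1 ^ 2 + u 2 ^ 2 + u 3 ^ 2) * (ξ 1 ^ 2 + ξ 2 ^ 2 + ξ 3 ^ 2) := by
    nlinarith [sq_nonneg (u 1 * ξ 2 - u 2 * ξ 1), sq_nonneg (u 1 * ξ 3 - u 3 * ξ 1),
      sq_nonneg (u 2 * ξ 3 - u 3 * ξ 2)]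
  have hle : (u 1 ^ 2 + u 2 ^ 2 + u 3 ^ 2) * (ξ 1 ^ 2 + ξ 2 ^ 2 + ξ 3 ^ 2)
      ≤ u 0 ^ 2 * ξ 0 ^ 2 :=
    mul_le_mul (by linarith) (by linarith) (by positivity) (by positivity)
  have := abs_le_of_sq_le_sq (hcs.trans (hle.trans_eq (mul_pow _ _ 2).symm)) (mul_nonneg h2 h4)
  linarith [(abs_le.1 this).2]

lemma minner_vecMulVec_covec_nonneg {u : Vec4} (hu : FutureCausal u) {X : Mat4}
    (hX : X ∈ coneD) : 0 ≤ minner (vecMulVec (covec u) (covec u)) X := by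
  obtain ⟨n, ξ, ζ, hξ, hζ, rfl⟩ := hX
  have : minner (vecMulVec (covec u) (covec u))
      (∑ k, (1/2 : ℝ) • (vecMulVec (ξ k) (ζ k) + vecMulVec (ζ k) (ξ k)))
      = ∑ k, mink u (ξ k) * mink u (ζ k) := by
    simp only [minner, Matrix.sum_apply, Fin.sum_univ_four, Finset.mul_sum,
      ← Finset.sum_add_distrib]
    refine Finset.sum_congr rfl fun k _ => ?_
    simp [vecMulVec_apply, covec, mink]
    ring
  rw [this]
  exact Finset.sum_nonneg fun k _ => mul_nonneg (mink_nonneg_of_futureCausal hu (hξ k))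
    (mink_nonneg_of_futureCausal hu (hζ k))

lemma minner_vecMulVec_covec_pos {u : Vec4} (hu : FutureCausal u) (hu0 : 0 < u 0) {X : Mat4}
    (hX : Generic X) : 0 < minner (vecMulVec (covec u) (covec u)) X := by
  obtain ⟨hs, hint⟩ := hX
  have hsym : ∀ t : ℝ, (X - t • (1 : Mat4))ᵀ = X - t • (1 : Mat4) := fun t => by
    simp [hs]
  have hcont : Continuous fun t : ℝ =>
      (⟨X - t • (1 : Mat4), hsym t⟩ : { A : Mat4 // Aᵀ = A }) := by
    fun_prop
  have hmem : ∀ᶠ t in 𝓝 (0 : ℝ), X - t • (1 : Mat4) ∈ coneD := by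
    have := hcont.continuousAt (x := 0) |>.eventually
      (show _ ∈ 𝓝 _ from mem_interior_iff_mem_nhds.1 (by simpa using hint))
    exact this
  obtain ⟨t, ht, ht0⟩ := ((hmem.filter_mono nhdsWithin_le_nhds).and
    (self_mem_nhdsWithin : Set.Ioi (0 : ℝ) ∈ 𝓝[>] 0)).exists
  have h1 := minner_vecMulVec_covec_nonneg hu ht
  have h2 : minner (vecMulVec (covec u) (covec u)) (X - t • (1 : Mat4))
      = minner (vecMulVec (covec u) (covec u)) X
        - t * (u 0 ^ 2 + u 1 ^ 2 + u 2 ^ 2 + u 3 ^ 2) := by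
    simp [minner, Fin.sum_univ_four, vecMulVec_apply, covec, Matrix.one_apply]
    ring
  have h3 : 0 < t * (u 0 ^ 2 + u 1 ^ 2 + u 2 ^ 2 + u 3 ^ 2) :=
    mul_pos ht0 (by positivity)
  linarith

end Cone

section Concentration

lemma mink_covec (u k : Vec4) : mink (covec u) k = u ⬝ᵥ k := by
  simp [mink, covec, dotProduct, Fin.sum_univ_four]

lemma mink_covec_covec (u : Vec4) : mink (covec u) (covec u) = mink u u := by
  simp [mink, covec]

lemma exists_null_dotProduct_pos {u : Vec4} (hu0 : 0 < u 0) :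
    ∃ w : Vec4, mink w w = 0 ∧ 0 < u ⬝ᵥ w := by
  rcases le_total 0 (u 3) with h | h
  · refine ⟨![1, 0, 0, 1], by simp [mink], ?_⟩
    simp [dotProduct, Fin.sum_univ_four]
    linarith
  · refine ⟨![1, 0, 0, -1], by simp [mink], ?_⟩
    simp [dotProduct, Fin.sum_univ_four]
    linarith

lemma interference_covec (u : Vec4) (X : Mat4) :
    interference (covec u) (covec u) (mink u u) X
      = minner (vecMulVec (covec u) (covec u)) X := by
  have : ∑ c, E c c * (covec u c * covec u c) = mink u u := by
    simp [Fin.sum_univ_four, E, covec, mink]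
    ring
  simp only [interference, this, sub_self, mul_zero, sub_zero, minner, vecMulVec_apply]

variable {ι : Type*} [Fintype ι]

lemma continuous_integral_interference {x : Vec4 → Mat4}
    (hx : ∀ a b, Continuous fun p => x p a b) (hc : HasCompactSupport x) (p₀ : Vec4) :
    Continuous fun P : (ι → Vec4) × (ι → Vec4) × ℝ =>
      ∫ p, ∑ f, ∑ g, interference (P.1 f) (P.1 g) P.2.2 (x p)
        * Real.cos ((P.2.1 f - P.2.1 g) ⬝ᵥ (p - p₀)) := by
  have h : ∀ P : (ι → Vec4) × (ι → Vec4) × ℝ,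
      ∫ p, ∑ f, ∑ g, interference (P.1 f) (P.1 g) P.2.2 (x p)
        * Real.cos ((P.2.1 f - P.2.1 g) ⬝ᵥ (p - p₀))
      = ∫ p in tsupport x, ∑ f, ∑ g, interference (P.1 f) (P.1 g) P.2.2 (x p)
        * Real.cos ((P.2.1 f - P.2.1 g) ⬝ᵥ (p - p₀)) := fun P =>
    (setIntegral_eq_integral_of_forall_compl_eq_zero fun p hp => by
      simp [interference, image_eq_zero_of_notMem_tsupport hp]).symm
  simp only [h]
  refine continuous_parametric_integral_of_continuous ?_ hc.isCompact
  have hx' : ∀ a b, Continuous fun q : ((ι → Vec4) × (ι → Vec4) × ℝ) × Vec4 => x q.2 a b :=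
    fun a b => (hx a b).comp continuous_snd
  unfold Function.uncurry interference dotProduct
  simp only [Pi.sub_apply]
  fun_prop

/-- Adding to a large multiple of `u` a profile of transverse wave covectors `Q`, together with a
vanishing correction restoring the dispersion relation, gives Klein–Gordon solutions whose
stress-energy approximates that of dust moving along `u` with the density profile of `Q`. -/
lemma exists_mem_kgC_integral_pos {u : Vec4} (hu : FutureCausal u) (hu0 : 0 < u 0)
    {Q : ι → Vec4} (hQ : ∀ f, u ⬝ᵥ Q f = 0) {x : Vec4 → Mat4}
    (hx : ∀ a b, Continuous fun p => x p a b) (hc : HasCompactSupport x) {p₀ : Vec4}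
    (hpos : 0 < ∫ p, ∑ f, ∑ g, minner (vecMulVec (covec u) (covec u)) (x p)
      * Real.cos ((Q f - Q g) ⬝ᵥ (p - p₀))) :
    ∃ T ∈ kgC, 0 < ∫ p, minner (T p) (x p) := by
  obtain ⟨w, hw, huw⟩ := exists_null_dotProduct_pos hu0
  let c : ℝ → ι → ℝ := fun l f => (1 - mink (Q f) (Q f)) / (2 * (l * (u ⬝ᵥ w) + mink (Q f) w))
  let r : ℝ → ι → Vec4 := fun l f => Q f + c l f • w
  let v : ℝ → ι → Vec4 := fun l f => covec u + l⁻¹ • r l f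
  let τ : ℝ → ℝ := fun l => mink u u + (l⁻¹) ^ 2
  have hden : ∀ f, Tendsto (fun l : ℝ => l * (u ⬝ᵥ w) + mink (Q f) w) atTop atTop := fun f =>
    tendsto_atTop_add_const_right _ _ (tendsto_id.atTop_mul_const huw)
  have hclim : ∀ f, Tendsto (fun l => c l f) atTop (𝓝 0) := fun f =>
    tendsto_const_nhds.div_atTop ((hden f).const_mul_atTop two_pos)
  have hrlim : Tendsto r atTop (𝓝 Q) := tendsto_pi_nhds.2 fun f => by
    simpa using tendsto_const_nhds.add ((hclim f).smul_const w)
  have hvlim : Tendsto v atTop (𝓝 fun _ => covec u) := tendsto_pi_nhds.2 fun f => by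
    simpa using tendsto_const_nhds.add
      (tendsto_inv_atTop_zero.smul (tendsto_pi_nhds.1 hrlim f))
  have hτlim : Tendsto τ atTop (𝓝 (mink u u)) := by
    simpa [τ] using (tendsto_const_nhds (x := mink u u)).add
      ((tendsto_inv_atTop_zero (𝕜 := ℝ)).pow 2)
  have hlim := ((continuous_integral_interference (ι := ι) hx hc p₀).tendsto
    ((fun _ => covec u), Q, mink u u)).comp (hvlim.prodMk_nhds (hrlim.prodMk_nhds hτlim))
  simp only [interference_covec] at hlim
  obtain ⟨l, ⟨hl, hldis⟩, hl0⟩ := (((hlim.eventually_const_lt hpos).and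
    (eventually_all.2 fun f => (hden f).eventually_gt_atTop 0)).and
      (eventually_gt_atTop (0 : ℝ))).exists
  simp only [Function.comp_apply] at hl
  have hτ : 0 < τ l := add_pos_of_nonneg_of_pos hu.1 (by positivity)
  let κ : ι → Vec4 := fun f => l • v l f
  set m : ℝ := l * √(τ l) with hm
  have hm0 : 0 < m := mul_pos hl0 (Real.sqrt_pos.2 hτ)
  have hm2 : m ^ 2 = l ^ 2 * τ l := by rw [hm, mul_pow, Real.sq_sqrt hτ.le]
  have hκ : ∀ f, κ f = l • covec u + r l f := fun f => by
    simp [κ, v, smul_smul, hl0.ne']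
  have hdisp : ∀ f, mink (κ f) (κ f) = m ^ 2 := fun f => by
    have hexp : mink (κ f) (κ f) = l ^ 2 * mink (covec u) (covec u)
        + 2 * l * mink (covec u) (Q f) + mink (Q f) (Q f)
        + 2 * c l f * (l * mink (covec u) w + mink (Q f) w) + c l f ^ 2 * mink w w := by
      rw [hκ]
      simp only [r, mink, Pi.add_apply, Pi.smul_apply, smul_eq_mul]
      ring
    have hcd : 2 * c l f * (l * (u ⬝ᵥ w) + mink (Q f) w) = 1 - mink (Q f) (Q f) := by
      have := (hldis f).ne'
      simp only [c]
      field_simp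
    rw [hexp, mink_covec_covec, mink_covec, mink_covec, hQ, hw, hcd, hm2]
    simp only [τ]
    field_simp
    ring
  have hmem : ∀ θ, kgT (wave 1 κ p₀ θ) m ∈ kgC := fun θ =>
    ⟨_, m, hm0, contDiff_wave 1 κ p₀ θ, solvesKG_wave hdisp 1 p₀ θ, rfl⟩
  have hsum : (∫ p, minner (kgT (wave 1 κ p₀ (0 + Real.pi / 2)) m p) (x p))
      + ∫ p, minner (kgT (wave 1 κ p₀ 0) m p) (x p)
      = l ^ 2 * ∫ p, ∑ f, ∑ g, interference (v l f) (v l g) (τ l) (x p)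
        * Real.cos ((r l f - r l g) ⬝ᵥ (p - p₀)) := by
    rw [← integral_add (integrable_minner_kgT (contDiff_wave _ _ _ _) m hx hc)
      (integrable_minner_kgT (contDiff_wave _ _ _ _) m hx hc), ← integral_const_mul]
    refine integral_congr_ae (Eventually.of_forall fun p => ?_)
    simp only [minner_kgT_wave_add, hm2, Finset.mul_sum]
    refine Finset.sum_congr rfl fun f _ => Finset.sum_congr rfl fun g _ => ?_
    rw [show κ f - κ g = r l f - r l g by rw [hκ, hκ, add_sub_add_left_eq_sub],
      interference_smul, mul_assoc]
  have hsum_pos := hsum ▸ mul_pos (pow_pos hl0 2) hl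
  by_contra! hno
  linarith [hno _ (hmem (0 + Real.pi / 2)), hno _ (hmem 0)]

/-- The covectors `u₀ dyᵢ - uᵢ dy₀`, whose common kernel is the line spanned by `u`. -/
def transverse (u : Vec4) (i : Fin 4) : Vec4 := u 0 • Pi.single i 1 - u i • Pi.single 0 1

lemma transverse_dotProduct (u : Vec4) (i : Fin 4) (y : Vec4) :
    transverse u i ⬝ᵥ y = u 0 * y i - u i * y 0 := by
  simp [transverse, sub_dotProduct, smul_dotProduct]

/-- The squared modulus of the sum of the transverse plane waves of frequency `δ`. -/
def profile (u p₀ : Vec4) (δ : ℝ) (p : Vec4) : ℝ :=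
  ∑ i, ∑ j, Real.cos (δ * (transverse u i ⬝ᵥ (p - p₀)) - δ * (transverse u j ⬝ᵥ (p - p₀)))

lemma continuous_profile (u p₀ : Vec4) (δ : ℝ) : Continuous (profile u p₀ δ) := by
  unfold profile
  simp only [transverse_dotProduct, Pi.sub_apply]
  fun_prop

lemma profile_nonneg (u p₀ : Vec4) (δ : ℝ) (p : Vec4) : 0 ≤ profile u p₀ δ p := by
  rw [profile, sum_cos_sub_eq_normSq fun i => δ * (transverse u i ⬝ᵥ (p - p₀))]
  exact Complex.normSq_nonneg _

lemma profile_line (u p₀ : Vec4) (δ t : ℝ) : profile u p₀ δ (p₀ + t • u) = 16 := by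
  have : ∀ i, transverse u i ⬝ᵥ (p₀ + t • u - p₀) = 0 := fun i => by
    rw [transverse_dotProduct]
    simp
    ring
  simp only [profile, this]
  norm_num

lemma profile_pow (u p₀ : Vec4) (δ : ℝ) (N : ℕ) (p : Vec4) :
    profile u p₀ δ p ^ N = ∑ f : Fin N → Fin 4, ∑ g : Fin N → Fin 4,
      Real.cos (((∑ k, δ • transverse u (f k)) - ∑ k, δ • transverse u (g k)) ⬝ᵥ (p - p₀)) := by
  rw [profile, ← sum_cos_sub_pow]
  simp only [sub_dotProduct, sum_dotProduct, smul_dotProduct, smul_eq_mul]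

/-- Close to `p₀` on the scale `1 / δ`, the profile is maximal only on the line through `p₀` in
the direction `u`. -/
lemma profile_lt {u p₀ : Vec4} (hu0 : 0 < u 0) {δ : ℝ} (hδ : 0 < δ) {p : Vec4}
    (hsmall : ∀ i, |δ * (transverse u i ⬝ᵥ (p - p₀))| < 2 * Real.pi)
    (hp : p ∉ Set.range fun t : ℝ => p₀ + t • u) : profile u p₀ δ p < 16 := by
  obtain ⟨i, hi⟩ : ∃ i, transverse u i ⬝ᵥ (p - p₀) ≠ 0 := by
    by_contra! h
    refine hp ⟨(p - p₀) 0 / u 0, funext fun i => ?_⟩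
    have := h i
    rw [transverse_dotProduct] at this
    simp only [Pi.add_apply, Pi.smul_apply, smul_eq_mul, Pi.sub_apply] at this ⊢
    field_simp
    linarith
  have hcos : Real.cos (δ * (transverse u i ⬝ᵥ (p - p₀))) < 1 := by
    refine (Real.cos_le_one _).lt_of_ne fun h => hi ?_
    have := (Real.cos_eq_one_iff_of_lt_of_lt (abs_lt.1 (hsmall i)).1 (abs_lt.1 (hsmall i)).2).1 h
    exact (mul_eq_zero.1 this).resolve_left hδ.ne'
  calc profile u p₀ δ p < ∑ _i : Fin 4, ∑ _j : Fin 4, (1 : ℝ) := by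
        refine Finset.sum_lt_sum (fun i _ => Finset.sum_le_sum fun j _ => Real.cos_le_one _)
          ⟨i, Finset.mem_univ i, Finset.sum_lt_sum (fun j _ => Real.cos_le_one _)
            ⟨0, Finset.mem_univ 0, ?_⟩⟩
        rw [transverse_dotProduct u 0, sub_self, mul_zero, sub_zero]
        exact hcos
    _ = 16 := by norm_num

lemma exists_pos_forall_abs_lt {K : Set Vec4} (hK : IsCompact K) (u p₀ : Vec4) :
    ∃ δ : ℝ, 0 < δ ∧ ∀ p ∈ K, ∀ i, |δ * (transverse u i ⬝ᵥ (p - p₀))| < 2 * Real.pi := by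
  have hcont : Continuous fun p : Vec4 => fun i => transverse u i ⬝ᵥ (p - p₀) := by
    simp only [transverse_dotProduct, Pi.sub_apply]
    fun_prop
  obtain ⟨C, hC⟩ := hK.exists_bound_of_continuousOn hcont.continuousOn
  refine ⟨1 / (1 + |C|), by positivity, fun p hp i => ?_⟩
  have h1 : |transverse u i ⬝ᵥ (p - p₀)| ≤ |C| :=
    (norm_le_pi_norm (fun i => transverse u i ⬝ᵥ (p - p₀)) i).trans
      ((hC p hp).trans (le_abs_self C))
  have h2 : |1 / (1 + |C|) * (transverse u i ⬝ᵥ (p - p₀))| ≤ 1 := by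
    rw [abs_mul, abs_of_pos (by positivity), one_div, inv_mul_le_one₀ (by positivity)]
    linarith
  linarith [Real.pi_gt_three]

end Concentration

/-- Klein–Gordon fields of all positive masses track all timelike and
null geodesics. -/
theorem kg_tracks_timelike_and_null_geodesics (p : Vec4) (u : Vec4)
    (hu : UnitTimelike u ∨ FutureNull u) :
    Tracks kgC (fun t => p + t • u) := by
  obtain ⟨hcausal, hu0⟩ : FutureCausal u ∧ 0 < u 0 := by
    rcases hu with ⟨⟨h1, h2⟩, -⟩ | ⟨-, h1, h2⟩
    · exact ⟨⟨h1.le, h2.le⟩, h2⟩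
    · exact ⟨⟨h1.ge, h2.le⟩, h2⟩
  rintro x hsmooth hc - ⟨O, hO, hγO, hxO⟩ ⟨t₀, ht₀⟩
  have hx : ∀ a b, Continuous fun q => x q a b := fun a b => (hsmooth a b).continuous
  set h : Vec4 → ℝ := fun q => minner (vecMulVec (covec u) (covec u)) (x q) with hh
  have hhcont : Continuous h := by
    simp only [hh, minner]
    fun_prop
  have hsupp : ∀ q, h q ≠ 0 → x q ≠ 0 := fun q hq hxq => hq (by simp [hh, minner, hxq])
  obtain ⟨δ, hδ, hsmall⟩ := exists_pos_forall_abs_lt hc.isCompact u p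
  obtain ⟨N, hN⟩ := exists_integral_pow_mul_pos (continuous_profile u p δ) hhcont
    (hc.mono fun q => hsupp q) (profile_nonneg u p δ) hO
    (fun q hq => minner_vecMulVec_covec_nonneg hcausal (hxO q hq))
    (minner_vecMulVec_covec_pos hcausal hu0 ht₀) (hγO ⟨t₀, rfl⟩)
    (fun q hq hqO => by
      rw [profile_line]
      exact profile_lt hu0 hδ (hsmall q (closure_mono (fun q => hsupp q) hq))
        fun hqγ => hqO (hγO hqγ))
    (by rw [profile_line]; norm_num)
  refine exists_mem_kgC_integral_pos (p₀ := p) hcausal hu0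
    (Q := fun f : Fin N → Fin 4 => ∑ k, δ • transverse u (f k)) (fun f => ?_) hx hc ?_
  · refine (dotProduct_sum _ _ _).trans (Finset.sum_eq_zero fun k _ => ?_)
    rw [dotProduct_smul, dotProduct_comm, transverse_dotProduct, mul_comm, sub_self, smul_zero]
  · simpa only [profile_pow, Finset.mul_sum, mul_comm _ (h _)] using hN
end
end
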